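/- Let B ⊂ A be a regular inclusion of simple unital C*-algebras with a finite-index conditional expectation, and let E₀ : A → B be the minimal conditional expectation. Then E₀ maps C_A(B) into ℂ·1, and the faithful tracial state τ₀ on C_A(B) determined by E₀(z) = τ₀(z)·1 admits a unitary orthonormal quasi-basis: there exist finitely many unitaries w_1, …, w_n ∈ C_A(B) such that τ₀(w_i* w_j) = δ_{ij} for all i, j and z = Σ_i τ₀(z w_i) w_i* for every z ∈ C_A(B). -/

import Mathlib

/-!
Let `C = C_A(B)`. For invertible `h ∈ C` the map `y ↦ E₀ (h* y h)` is, after normalization, again a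
finite-index expectation onto `B`; comparing the indices for `h = exp (tx / 2)` at `t = 0` shows
that `∑ λᵢ z λᵢ* = r E₀ z` for all `z ∈ C`. A finite-index expectation with this property for a
given `r` is unique, so `E₀` commutes with every automorphism of `A` that preserves `B`. Conjugation
by unitaries of `C` shows that `τ₀` is a trace, and finite index gives `c ‖x‖² ≤ τ₀ (x* x)` on `C`,
so that `C` is finite-dimensional.

For minimal projections `p`, `q` of `C`, regularity and primeness of `A` give a unitary `u`
normalizing `B` with `p u q ≠ 0`. Conjugation by `u` is a `τ₀`-preserving automorphism of `C` taking
`q` to a projection equivalent to `p`. Hence all minimal projections have the same trace, and the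
equivalence classes in a complete orthogonal family of them all have the same size `k`. The
equivalence relation is then a union of the graphs of `k` permutations; on each graph, a complex
Hadamard matrix combines the partial isometries into pairwise orthogonal unitaries.
-/

namespace RegularInclusion

variable {A : Type*} [NormedRing A] [StarRing A] [CStarRing A] [CompleteSpace A]
  [NormedAlgebra ℂ A] [StarModule ℂ A]

/-- A conditional expectation of `A` onto the subset `B`: a `ℂ`-linear positive
`B`-bimodular projection of `A` onto `B`. -/
def IsCondExp (B : Set A) (E : A →ₗ[ℂ] A) : Prop :=
  (∀ x, E x ∈ B) ∧ (∀ b ∈ B, E b = b) ∧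
  (∀ x, ∃ y, E (star x * x) = star y * y) ∧
  (∀ b₁ ∈ B, ∀ b₂ ∈ B, ∀ x, E (b₁ * x * b₂) = b₁ * E x * b₂)

/-- `l` is a right quasi-basis for `E`, witnessing finite index. -/
def IsRightQB (E : A →ₗ[ℂ] A) {n : ℕ} (l : Fin n → A) : Prop :=
  ∀ x, x = ∑ i, E (x * l i) * star (l i)

/-- The centralizer (relative commutant) `C_A(B)` of `B` in `A`. -/
def cent (B : Set A) : Set A := {x | ∀ b ∈ B, x * b = b * x}

/-- The normalizer `N_A(B) = {u ∈ U(A) : uBu* = B}` of `B` in `A`. -/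
def normalizer (B : Set A) : Set A :=
  {u | u ∈ unitary A ∧ (fun x => u * x * star u) '' B = B}

/-- The set `U(B)` of unitaries of `B`. -/
def UB (B : Set A) : Set A := {b | b ∈ B ∧ b ∈ unitary A}

/-- The set `U(B)·U(C_A(B))` of products of a unitary of `B` and a unitary of
the centralizer of `B`. -/
def UBC (B : Set A) : Set A :=
  {x | ∃ b c, b ∈ B ∧ b ∈ unitary A ∧ c ∈ cent B ∧ c ∈ unitary A ∧ x = b * c}

/-- Simplicity of the C*-algebra (given as the subset `S` of `A`): the only closed
two-sided ideals of `S` are `{0}` and `S`. -/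
def IsSimpleCStar (S : Set A) : Prop :=
  ∀ I : Set A, I ⊆ S → IsClosed I → (0 : A) ∈ I →
    (∀ x ∈ I, ∀ y ∈ I, x + y ∈ I) →
    (∀ x ∈ I, ∀ b ∈ S, x * b ∈ I ∧ b * x ∈ I) →
    I = {0} ∨ I = S

/-- The intermediate C*-subalgebra `C := C*(B ∪ C_A(B))` generated by `B` and the
centralizer of `B`. -/
def genC (B : Set A) : StarSubalgebra ℂ A :=
  (StarAlgebra.adjoin ℂ (B ∪ cent B)).topologicalClosure

/-- Regularity of the inclusion `B ⊆ A`: the normalizer of `B` generates `A` as a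
C*-algebra. -/
def IsRegular (B : Set A) : Prop :=
  (StarAlgebra.adjoin ℂ (normalizer B)).topologicalClosure = ⊤

/-- `E₀` is the minimal conditional expectation of `A` onto `B`: the finite-index
conditional expectation whose (scalar) Watatani index is least among all finite-index
conditional expectations onto `B`. -/
def IsMinimalCondExp (B : Set A) (E₀ : A →ₗ[ℂ] A) : Prop :=
  IsCondExp B E₀ ∧
  ∃ (r₀ : ℝ) (n : ℕ) (l : Fin n → A), IsRightQB E₀ l ∧
    (∑ i, l i * star (l i)) = (r₀ : ℂ) • 1 ∧
    ∀ E : A →ₗ[ℂ] A, IsCondExp B E → ∀ (m : ℕ) (μ : Fin m → A), IsRightQB E μ →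
      ∀ r : ℝ, (∑ i, μ i * star (μ i)) = (r : ℂ) • 1 → r₀ ≤ r

/-! ### Prime C*-algebras -/

/-- Primeness of the C*-algebra given as the subset `S` of `A`, stated for elements instead of
ideals. It is the form in which simplicity is used. -/
def IsPrimeCStar (S : Set A) : Prop :=
  ∀ p ∈ S, ∀ q ∈ S, (∀ a ∈ S, p * a * q = 0) → p = 0 ∨ q = 0

section Prime

variable {M : Type*} [CStarAlgebra M] {S : StarSubalgebra ℂ M}

lemma IsSimpleCStar.isPrimeCStar (hS : IsSimpleCStar (S : Set M))
    (hclosed : IsClosed (S : Set M)) : IsPrimeCStar (S : Set M) := by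
  intro p _ q hq hpq
  let I : Set M := {x | x ∈ S ∧ ∀ a ∈ S, p * a * x = 0}
  have hIclosed : IsClosed I := by
    simp only [I, Set.ofPred_and, Set.ofPred_forall]
    exact hclosed.inter <| isClosed_biInter fun a _ =>
      isClosed_eq (continuous_const.mul continuous_id) continuous_const
  have hI : I = {0} ∨ I = S :=
    hS I (fun x hx => hx.1) hIclosed ⟨zero_mem S, fun a _ => mul_zero _⟩
      (fun x hx y hy => ⟨add_mem hx.1 hy.1, fun a ha => by
        rw [mul_add, hx.2 a ha, hy.2 a ha, add_zero]⟩)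
      (fun x hx b hb => ⟨⟨mul_mem hx.1 hb, fun a ha => by rw [← mul_assoc, hx.2 a ha, zero_mul]⟩,
        ⟨mul_mem hb hx.1, fun a ha => by
          rw [← mul_assoc, mul_assoc p, hx.2 (a * b) (mul_mem ha hb)]⟩⟩)
  rcases hI with hI | hI
  · exact Or.inr (hI.subset (show q ∈ I from ⟨hq, hpq⟩))
  · have h1 : (1 : M) ∈ I := hI.superset (one_mem S)
    exact Or.inl (by simpa using h1.2 1 (one_mem S))

lemma eq_smul_one_of_spectrum_subsingleton {z : M} [IsStarNormal z]
    (hz : (spectrum ℂ z).Subsingleton) : ∃ c : ℂ, z = c • (1 : M) := by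
  obtain ⟨c, hc⟩ : ∃ c, spectrum ℂ z ⊆ {c} := by
    rcases hz.eq_empty_or_singleton with h | ⟨c, h⟩
    exacts [⟨0, by simp [h]⟩, ⟨c, h.subset⟩]
  exact ⟨c, by rw [CFC.eq_algebraMap_of_spectrum_subset_singleton z c hc,
    Algebra.algebraMap_eq_smul_one]⟩

/-- Two distinct points of the spectrum of a central element would give, through disjointly
supported functions, two nonzero central elements with product zero. -/
lemma IsPrimeCStar.exists_eq_smul_one (hS : IsPrimeCStar (S : Set M))
    (hclosed : IsClosed (S : Set M)) {z : M} (hzS : z ∈ S) (hz : z ∈ cent (S : Set M)) :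
    ∃ c : ℂ, z = c • (1 : M) := by
  have hnormal : IsStarNormal z := ⟨(hz _ (star_mem hzS)).symm⟩
  have hzstar : star z ∈ cent (S : Set M) := fun a ha => by
    simpa using (congrArg star (hz _ (star_mem ha))).symm
  refine eq_smul_one_of_spectrum_subsingleton fun s hs t ht => ?_
  by_contra hst
  let f : ℂ → ℂ → ℂ := fun a w => (max 0 (dist s t / 2 - dist w a) : ℝ)
  have hf : ∀ a, Continuous (f a) := fun a => by fun_prop
  have hmem : ∀ a, cfc (f a) z ∈ S := fun a =>
    StarAlgebra.elemental.le_of_mem hclosed hzS (cfc_mem_elemental (f a) z)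
  have hne : ∀ a ∈ spectrum ℂ z, cfc (f a) z ≠ 0 := fun a ha h0 => by
    have hle : dist s t / 2 ≤ 0 := by simpa [f, h0] using norm_apply_le_norm_cfc (f a) z ha
    exact hst (dist_le_zero.mp (by linarith))
  have hdisj : ∀ w, f s w * f t w = 0 := fun w => by
    have := dist_triangle_left s t w
    rcases le_total (dist s t / 2) (dist w s) with h | h
    · simp [f, h]
    · simp [f, show dist s t / 2 ≤ dist w t by linarith]
  have hprod : ∀ a ∈ S, cfc (f s) z * a * cfc (f t) z = 0 := fun a ha => by
    have hcomm : Commute (cfc (f s) z) a := Commute.cfc (hz a ha) (hzstar a ha) (f s)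
    rw [hcomm.eq, mul_assoc, ← cfc_mul (f s) (f t) z]
    simp [hdisj]
  exact (hS _ (hmem s) _ (hmem t) hprod).elim (hne s hs) (hne t ht)

end Prime

/-! ### Minimal projections -/

section MinimalProjections

variable {C : Type*} [CStarAlgebra C]

variable (C) in
/-- Every self-adjoint element has finite spectrum: the form in which finite dimensionality of `C`
is obtained from a trace and used to find projections. -/
def HasFiniteSpectra : Prop := ∀ x : C, IsSelfAdjoint x → (spectrum ℝ x).Finite

/-- A minimal projection: a nonzero projection whose only subprojections are `0` and itself. -/
structure IsMinProj (p : C) : Prop extends IsStarProjection p where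
  ne_zero : p ≠ 0
  eq_zero_or_eq : ∀ e, IsStarProjection e → p * e = e → e = 0 ∨ e = p

lemma IsMinProj.map {D : Type*} [CStarAlgebra D] {p : C} (hp : IsMinProj p) (α : C ≃⋆ₐ[ℂ] D) :
    IsMinProj (α p) where
  toIsStarProjection := hp.toIsStarProjection.map α
  ne_zero := (map_ne_zero_iff α α.injective).mpr hp.ne_zero
  eq_zero_or_eq e he hpe := by
    have hle : p * α.symm e = α.symm e := by
      simpa only [map_mul, StarAlgEquiv.symm_apply_apply] using congrArg α.symm hpe
    exact (hp.eq_zero_or_eq (α.symm e) (he.map α.symm) hle).imp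
      (fun h => by simpa using congrArg α h) (fun h => by simpa using congrArg α h)

lemma HasFiniteSpectra.exists_spectral_projection (hC : HasFiniteSpectra C) {y : C}
    (hy : IsSelfAdjoint y) (hy0 : y ≠ 0) :
    ∃ (s : ℝ) (e : C), s ≠ 0 ∧ e ≠ 0 ∧ IsStarProjection e ∧ y * e = s • e := by
  obtain ⟨s, hs, hs0⟩ : ∃ s ∈ spectrum ℝ y, s ≠ 0 := by
    by_contra! hcon
    exact hy0 (CFC.eq_zero_of_spectrum_subset_zero (R := ℝ) y (fun s hs => hcon s hs) hy)
  have hcont : ∀ f : ℝ → ℝ, ContinuousOn f (spectrum ℝ y) := (hC y hy).continuousOn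
  let f : ℝ → ℝ := Pi.single s 1
  refine ⟨s, cfc f y, hs0, fun h0 => ?_, ⟨?_, cfc_predicate f y⟩, ?_⟩
  · have := norm_apply_le_norm_cfc f y hs (hcont f)
    norm_num [f, h0] at this
  · rw [IsIdempotentElem, ← cfc_mul f f y (hcont f) (hcont f), ← Pi.mul_def, ← Pi.single_mul,
      one_mul]
  · nth_rw 1 [← cfc_id' ℝ y]
    rw [← cfc_mul _ f y (hcont _) (hcont f), ← cfc_const_mul s f y (hcont f)]
    refine cfc_congr fun r _ => ?_
    by_cases hr : r = s <;> simp [f, hr]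

lemma IsMinProj.exists_eq_real_smul (hC : HasFiniteSpectra C) {p : C} (hp : IsMinProj p) {y : C}
    (hy : IsSelfAdjoint y) (hpy : p * y = y) : ∃ s : ℝ, y = s • p := by
  by_cases hy0 : y = 0
  · exact ⟨0, by simp [hy0]⟩
  obtain ⟨s, e, hs0, he0, he, hye⟩ := hC.exists_spectral_projection hy hy0
  have hpe : p * e = e := by
    rw [← inv_smul_smul₀ hs0 e, ← hye, mul_smul_comm, ← mul_assoc, hpy]
  have hyp : y * p = y := by simpa [hy.star_eq, hp.isSelfAdjoint.star_eq] using congrArg star hpy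
  have hep : e = p := (hp.eq_zero_or_eq e he hpe).resolve_left he0
  exact ⟨s, by rw [← hep, ← hye, hep, hyp]⟩

lemma IsMinProj.exists_corner_eq_smul (hC : HasFiniteSpectra C) {p : C} (hp : IsMinProj p)
    (x : C) : ∃ c : ℂ, p * x * p = c • p := by
  have hpp : p * p = p := hp.isIdempotentElem
  have hcorner : ∀ y : C, IsSelfAdjoint y → ∃ s : ℝ, p * y * p = s • p := fun y hy =>
    hp.exists_eq_real_smul hC (hy.conjugate_self hp.isSelfAdjoint) (by simp only [← mul_assoc, hpp])
  obtain ⟨s, hs⟩ := hcorner (realPart x) (realPart x).2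
  obtain ⟨t, ht⟩ := hcorner (imaginaryPart x) (imaginaryPart x).2
  refine ⟨s + t * Complex.I, ?_⟩
  conv_lhs => rw [← realPart_add_I_smul_imaginaryPart x]
  rw [mul_add, add_mul, hs, mul_smul_comm, smul_mul_assoc, ht, add_smul, mul_comm, mul_smul]
  simp

/-- Murray–von Neumann equivalence: `p = v v*` and `q = v* v` for some `v`. -/
def MvNEquiv (p q : C) : Prop := ∃ v : C, v * star v = p ∧ star v * v = q

namespace MvNEquiv

variable {p q s : C}

lemma refl (hp : IsStarProjection p) : MvNEquiv p p :=
  ⟨p, by rw [hp.isSelfAdjoint.star_eq, hp.isIdempotentElem.eq],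
    by rw [hp.isSelfAdjoint.star_eq, hp.isIdempotentElem.eq]⟩

lemma symm : MvNEquiv p q → MvNEquiv q p := fun ⟨v, hv₁, hv₂⟩ =>
  ⟨star v, by rw [star_star, hv₂], by rw [star_star, hv₁]⟩

lemma trans (hp : IsStarProjection p) (hs : IsStarProjection s) :
    MvNEquiv p q → MvNEquiv q s → MvNEquiv p s := fun ⟨v, hv₁, hv₂⟩ ⟨w, hw₁, hw₂⟩ => by
  refine ⟨v * w, ?_, ?_⟩
  · calc v * w * star (v * w) = v * (w * star w) * star v := by simp only [star_mul, mul_assoc]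
      _ = v * star v * (v * star v) := by rw [hw₁, ← hv₂]; simp only [mul_assoc]
      _ = p := by rw [hv₁, hp.isIdempotentElem.eq]
  · calc star (v * w) * (v * w) = star w * (star v * v) * w := by simp only [star_mul, mul_assoc]
      _ = star w * w * (star w * w) := by rw [hv₂, ← hw₁]; simp only [mul_assoc]
      _ = s := by rw [hw₂, hs.isIdempotentElem.eq]

lemma map {D : Type*} [CStarAlgebra D] (h : MvNEquiv p q) (α : C ≃⋆ₐ[ℂ] D) :
    MvNEquiv (α p) (α q) := by
  obtain ⟨v, hv₁, hv₂⟩ := h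
  exact ⟨α v, by rw [← map_star, ← map_mul, hv₁], by rw [← map_star, ← map_mul, hv₂]⟩

end MvNEquiv

/-- Between two minimal projections, `x x*` and `x* x` are the same positive multiple of the
projections, so that `x` is a partial isometry up to normalization. -/
lemma IsMinProj.mvnEquiv (hC : HasFiniteSpectra C) {p q x : C} (hp : IsMinProj p)
    (hq : IsMinProj q) (hx : x ≠ 0) (hpx : p * x = x) (hxq : x * q = x) : MvNEquiv p q := by
  have hqx : q * star x = star x := by simpa [hq.isSelfAdjoint.star_eq] using congrArg star hxq
  obtain ⟨s, hs⟩ := hp.exists_eq_real_smul hC (.mul_star_self x) (by rw [← mul_assoc, hpx])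
  obtain ⟨t, ht⟩ := hq.exists_eq_real_smul hC (.star_mul_self x) (by rw [← mul_assoc, hqx])
  have hst : t = s := smul_left_injective ℝ hx <| calc
    t • x = x * (star x * x) := by rw [ht, mul_smul_comm, hxq]
    _ = s • x := by rw [← mul_assoc, hs, smul_mul_assoc, hpx]
  have hspos : 0 < s := by
    let _ : PartialOrder C := CStarAlgebra.spectralOrder C
    have _ : StarOrderedRing C := CStarAlgebra.spectralOrderedRing C
    by_contra! hneg
    have hle : x * star x ≤ 0 := hs ▸ smul_nonpos_of_nonpos_of_nonneg hneg hp.nonneg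
    exact hx (CStarRing.mul_star_self_eq_zero_iff x |>.mp (hle.antisymm (mul_star_self_nonneg x)))
  have hsqrt : (√s)⁻¹ * (√s)⁻¹ * s = 1 := by
    rw [← mul_inv, Real.mul_self_sqrt hspos.le, inv_mul_cancel₀ hspos.ne']
  refine ⟨(√s)⁻¹ • x, ?_, ?_⟩
  · rw [star_smul, star_trivial, smul_mul_smul_comm, hs, smul_smul, hsqrt, one_smul]
  · rw [star_smul, star_trivial, smul_mul_smul_comm, ht, hst, smul_smul, hsqrt, one_smul]

end MinimalProjections

/-! ### Traces bounded below -/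

section Trace

open scoped ComplexOrder

variable {C : Type*} [CStarAlgebra C] {τ : C →ₗ[ℂ] ℂ} {c : ℝ}

/-- A tracial state `τ` with the Pimsner–Popa type lower bound `c ‖x‖² ≤ τ(x* x)`, which makes it
faithful and forces `C` to be finite-dimensional. -/
structure IsBoundedBelowTrace (τ : C →ₗ[ℂ] ℂ) (c : ℝ) : Prop where
  pos : 0 < c
  map_one : τ 1 = 1
  map_mul_comm : ∀ x y, τ (x * y) = τ (y * x)
  bound : ∀ x, ((c * ‖x‖ ^ 2 : ℝ) : ℂ) ≤ τ (star x * x)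

namespace IsBoundedBelowTrace

lemma re_nonneg (h : IsBoundedBelowTrace τ c) (x : C) : 0 ≤ (τ (star x * x)).re :=
  le_trans (mul_nonneg h.pos.le (sq_nonneg _)) (Complex.le_def.mp (h.bound x)).1

lemma re_map_nonneg (h : IsBoundedBelowTrace τ c) {p : C} (hp : IsStarProjection p) :
    0 ≤ (τ p).re := by
  simpa only [hp.isSelfAdjoint.star_eq, hp.isIdempotentElem.eq] using h.re_nonneg p

lemma le_re_map (h : IsBoundedBelowTrace τ c) {p : C} (hp : IsStarProjection p) (hp0 : p ≠ 0) :
    c ≤ (τ p).re := by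
  have hnorm : ‖p‖ * ‖p‖ = ‖p‖ := by
    rw [← CStarRing.norm_star_mul_self, hp.isSelfAdjoint.star_eq, hp.isIdempotentElem.eq]
  have hle := (Complex.le_def.mp (h.bound p)).1
  rwa [hp.isSelfAdjoint.star_eq, hp.isIdempotentElem.eq,
    mul_left_cancel₀ (norm_ne_zero_iff.mpr hp0) (hnorm.trans (mul_one _).symm), one_pow, mul_one,
    Complex.ofReal_re] at hle

lemma re_map_mono (h : IsBoundedBelowTrace τ c) {p q : C} (hp : IsStarProjection p)
    (hq : IsStarProjection q) (hpq : p * q = p) : (τ p).re ≤ (τ q).re := by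
  simpa using h.re_map_nonneg (hp.sub_of_mul_eq_left hq hpq)

lemma re_map_le_one (h : IsBoundedBelowTrace τ c) {p : C} (hp : IsStarProjection p) :
    (τ p).re ≤ 1 := by
  simpa [h.map_one] using h.re_map_mono hp (.one C) (mul_one p)

lemma apply_eq_of_mvnEquiv (h : IsBoundedBelowTrace τ c) {p q : C} (hpq : MvNEquiv p q) :
    τ p = τ q := by
  obtain ⟨v, rfl, rfl⟩ := hpq
  exact h.map_mul_comm _ _

end IsBoundedBelowTrace

/-- A partition of unity on `t` subordinate to the sets `(t \ {a})ᶜ`. -/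
lemma exists_continuous_sum_le_one {X : Type*} [TopologicalSpace X] [T4Space X] (t : Finset X) :
    ∃ f : t → C(X, ℝ), (∀ a x, 0 ≤ f a x) ∧ (∀ a, f a a = 1) ∧ ∀ x, ∑ a, f a x ≤ 1 := by
  obtain ⟨f, hf⟩ := PartitionOfUnity.exists_isSubordinate_of_locallyFinite t.finite_toSet.isClosed
    (fun a : t => ((t : Set X) \ {(a : X)})ᶜ)
    (fun a => (t.finite_toSet.subset Set.sdiff_subset).isClosed.isOpen_compl)
    (locallyFinite_of_finite _) (fun a ha => Set.mem_iUnion.mpr ⟨⟨a, ha⟩, by simp⟩)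
  refine ⟨f, f.nonneg, fun a => ?_, fun x => ?_⟩
  · rw [← f.sum_eq_one a.2, finsum_eq_single _ a]
    intro b hba
    by_contra hne
    exact hf b (subset_closure hne) ⟨a.2, fun h => hba (Subtype.ext h.symm)⟩
  · simpa only [finsum_eq_sum_of_fintype] using f.sum_le_one x

namespace IsBoundedBelowTrace

/-- A point `a` of the spectrum contributes at least `c` to the trace of `1`, through the square
root of a function `f a` with `f a a = 1`; the sum of these functions is at most `1`. -/
lemma hasFiniteSpectra (h : IsBoundedBelowTrace τ c) : HasFiniteSpectra C := by
  intro x hx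
  let _ : PartialOrder C := CStarAlgebra.spectralOrder C
  have _ : StarOrderedRing C := CStarAlgebra.spectralOrderedRing C
  by_contra hinf
  obtain ⟨n, hn⟩ := exists_nat_gt (1 / c)
  obtain ⟨t, htS, rfl⟩ := Set.Infinite.exists_subset_card_eq hinf n
  obtain ⟨f, hf0, hf1, hfsum⟩ := exists_continuous_sum_le_one t
  let y : t → C := fun a => cfc (fun s => √(f a s)) x
  have hyy : ∀ a, star (y a) * y a = cfc (f a) x := fun a => by
    rw [IsSelfAdjoint.star_eq (cfc_predicate _ x), ← cfc_mul _ _ x]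
    exact cfc_congr fun s _ => Real.mul_self_sqrt (hf0 a s)
  have hle : ∀ a, c ≤ (τ (star (y a) * y a)).re := fun a => by
    have hnorm : 1 ≤ ‖y a‖ := by
      simpa [hf1] using norm_apply_le_norm_cfc (fun s => √(f a s)) x (htS a.2)
    calc c = c * 1 ^ 2 := by ring
      _ ≤ c * ‖y a‖ ^ 2 := by have := h.pos; gcongr
      _ ≤ _ := (Complex.le_def.mp (h.bound (y a))).1
  have hsum : ∑ a, (τ (star (y a) * y a)).re ≤ 1 := by
    have hle : ∑ a, star (y a) * y a ≤ 1 := by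
      simp only [hyy]
      rw [← cfc_sum_univ (fun a s => f a s) x]
      exact cfc_le_one _ x fun s _ => by simpa using hfsum s
    obtain ⟨z, hz⟩ := CStarAlgebra.nonneg_iff_eq_star_mul_self.mp (sub_nonneg.mpr hle)
    simpa [← hz, h.map_one] using h.re_nonneg z
  have hcard : t.card * c ≤ 1 := by
    simpa using (Finset.card_nsmul_le_sum Finset.univ _ c fun a _ => hle a).trans hsum
  rw [div_lt_iff₀ h.pos] at hn
  linarith

/-- Otherwise `p` would have subprojections of traces at most `τ p - n c` for every `n`. -/
lemma exists_isMinProj (h : IsBoundedBelowTrace τ c) {p : C} (hp : IsStarProjection p)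
    (hp0 : p ≠ 0) : ∃ e, IsMinProj e ∧ p * e = e := by
  by_contra! hmin
  have hchain : ∀ n : ℕ, ∃ e, IsStarProjection e ∧ e ≠ 0 ∧ p * e = e ∧ (τ e).re ≤ 1 - n * c := by
    intro n
    induction n with
    | zero => exact ⟨p, hp, hp0, hp.isIdempotentElem, by simpa using h.re_map_le_one hp⟩
    | succ n ih =>
      obtain ⟨e, he, he0, hpe, hτe⟩ := ih
      obtain ⟨d, hd, hed, hd0, hde⟩ : ∃ d, IsStarProjection d ∧ e * d = d ∧ d ≠ 0 ∧ d ≠ e := by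
        by_contra! hcon
        exact hmin e ⟨he, he0, fun d hd hed => or_iff_not_imp_left.mpr (hcon d hd hed)⟩ hpe
      have hgap := h.le_re_map (hd.sub_of_mul_eq_right he hed) (sub_ne_zero.mpr hde.symm)
      rw [map_sub, Complex.sub_re] at hgap
      refine ⟨d, hd, hd0, by rw [← hed, ← mul_assoc, hpe], ?_⟩
      push_cast
      linarith
  obtain ⟨n, hn⟩ := exists_nat_gt (1 / c)
  obtain ⟨e, he, -, -, hτe⟩ := hchain n
  rw [div_lt_iff₀ h.pos] at hn
  linarith [h.re_map_nonneg he]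

end IsBoundedBelowTrace

lemma isStarProjection_sum {ι : Type*} {p : ι → C} (hp : OrthogonalIdempotents p) (s : Finset ι)
    (hsa : ∀ i ∈ s, IsSelfAdjoint (p i)) : IsStarProjection (∑ i ∈ s, p i) :=
  ⟨hp.isIdempotentElem_sum, isSelfAdjoint_sum s hsa⟩

lemma exists_orthogonal_isMinProj_succ (h : IsBoundedBelowTrace τ c) {n : ℕ} {p : Fin n → C}
    (hp : OrthogonalIdempotents p) (hmin : ∀ i, IsMinProj (p i)) (hsum : ∑ i, p i ≠ 1) :
    ∃ q : Fin (n + 1) → C, OrthogonalIdempotents q ∧ ∀ i, IsMinProj (q i) := by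
  have hproj : IsStarProjection (∑ i, p i) :=
    isStarProjection_sum hp _ fun i _ => (hmin i).isSelfAdjoint
  obtain ⟨e, he, hle⟩ := h.exists_isMinProj hproj.one_sub (sub_ne_zero.mpr hsum.symm)
  have hleft : (∑ i, p i) * e = 0 := by
    rw [← hle, ← mul_assoc, hproj.mul_one_sub_self, zero_mul]
  have hright : e * ∑ i, p i = 0 := by
    simpa [hproj.isSelfAdjoint.star_eq, he.isSelfAdjoint.star_eq] using congrArg star hleft
  refine ⟨_, (OrthogonalIdempotents.equiv (finSuccEquiv n)).mpr
    (hp.option e he.isIdempotentElem hright hleft), fun i => ?_⟩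
  cases i using Fin.cases <;> simp [he, hmin]

/-- An orthogonal family of minimal projections has at most `1 / c` members, so that adding one as
long as its sum is not `1` terminates. -/
lemma IsBoundedBelowTrace.exists_completeOrthogonalIdempotents (h : IsBoundedBelowTrace τ c) :
    ∃ (n : ℕ) (p : Fin n → C), CompleteOrthogonalIdempotents p ∧ ∀ i, IsMinProj (p i) := by
  by_contra! hcon
  have hall : ∀ n : ℕ, ∃ p : Fin n → C, OrthogonalIdempotents p ∧ ∀ i, IsMinProj (p i) := by
    intro n
    induction n with
    | zero => exact ⟨Fin.elim0, ⟨fun i => i.elim0, fun i => i.elim0⟩, fun i => i.elim0⟩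
    | succ n ih =>
      obtain ⟨p, hp, hmin⟩ := ih
      refine exists_orthogonal_isMinProj_succ h hp hmin fun hsum => ?_
      obtain ⟨i, hi⟩ := hcon n p ⟨hp, hsum⟩
      exact hi (hmin i)
  obtain ⟨n, hn⟩ := exists_nat_gt (1 / c)
  obtain ⟨p, hp, hmin⟩ := hall n
  have hle : n * c ≤ ∑ i, (τ (p i)).re := by
    simpa using Finset.card_nsmul_le_sum Finset.univ (fun i => (τ (p i)).re) c
      fun i _ => h.le_re_map (hmin i).toIsStarProjection (hmin i).ne_zero
  have hone : (τ (∑ i, p i)).re ≤ 1 :=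
    h.re_map_le_one (isStarProjection_sum hp _ fun i _ => (hmin i).isSelfAdjoint)
  rw [map_sum, Complex.re_sum] at hone
  rw [div_lt_iff₀ h.pos] at hn
  linarith

end Trace

/-! ### Orthonormal bases of unitaries -/

/-- The character table of a cyclic group. -/
lemma exists_isHadamard (ι : Type*) [Fintype ι] [DecidableEq ι] :
    ∃ H : Matrix ι ι ℂ, H.IsHadamard := by
  rcases isEmpty_or_nonempty ι with hι | hι
  · exact ⟨0, isEmptyElim, Subsingleton.elim _ _, Subsingleton.elim _ _⟩
  have : NeZero (Fintype.card ι) := ⟨Fintype.card_ne_zero⟩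
  let H : Matrix (ZMod (Fintype.card ι)) (ZMod (Fintype.card ι)) ℂ :=
    fun i s => ZMod.stdAddChar (s * i)
  have hstar : ∀ i s, star (H i s) = ZMod.stdAddChar (-(s * i)) := fun i s =>
    (AddChar.map_neg_eq_conj _ _).symm
  have hH : H.IsHadamard := by
    refine .of_mul_conjTranspose (fun i s => Unitary.mem_iff_star_mul_self.mpr ?_) ?_ ?_
    · rw [hstar, ← AddChar.map_add_eq_mul, neg_add_cancel, AddChar.map_zero_eq_one]
    · ext i j
      have hmul : ∀ s, H i s * star (H j s) = ZMod.stdAddChar (s * (i - j)) := fun s => by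
        rw [hstar, ← AddChar.map_add_eq_mul, mul_sub, sub_eq_add_neg]
      simp only [Matrix.mul_apply, Matrix.conjTranspose_apply, hmul,
        AddChar.sum_mulShift _ (ZMod.isPrimitive_stdAddChar _), sub_eq_zero, Matrix.smul_apply,
        Matrix.one_apply, smul_eq_mul, mul_ite, mul_one, mul_zero]
      split_ifs <;> simp
    · exact .of_ne_zero (Nat.cast_ne_zero.mpr Fintype.card_ne_zero)
  let e : ZMod (Fintype.card ι) ≃ ι := Fintype.equivOfCardEq (ZMod.card _)
  exact ⟨_, hH.reindex e e⟩

/-- The permutations are cyclic shifts within the classes. -/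
lemma exists_perms_of_card_class_eq {ι : Type*} [Finite ι] (S : Setoid ι) {k : ℕ} [NeZero k]
    (hS : ∀ i, Nat.card {j // S j i} = k) :
    ∃ σ : Fin k → Equiv.Perm ι, (∀ r i, S (σ r i) i) ∧
      (∀ i, Function.Injective fun r => σ r i) ∧ ∀ i j, S j i → ∃ r, σ r i = j := by
  have hfiber : ∀ c : Quotient S, Nonempty ({i // Quotient.mk S i = c} ≃ Fin k) := by
    refine Quotient.ind fun i => ⟨Finite.equivFinOfCardEq ?_⟩
    rw [← hS i]
    exact Nat.card_congr (Equiv.subtypeEquivRight fun j => Quotient.eq)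
  let e : ι ≃ Quotient S × Fin k := (Equiv.sigmaFiberEquiv (Quotient.mk S)).symm.trans
    ((Equiv.sigmaCongrRight fun c => (hfiber c).some).trans (Equiv.sigmaEquivProd _ _))
  have he : ∀ i, (e i).1 = Quotient.mk S i := fun i => rfl
  refine ⟨fun r => (e.trans ((Equiv.refl _).prodCongr (Equiv.addRight r))).trans e.symm,
    fun r i => Quotient.exact ?_, fun i r r' h => ?_, fun i j hij => ⟨(e j).2 - (e i).2, ?_⟩⟩
  · rw [← he, ← he]
    simp
  · simpa [Prod.ext_iff] using h
  · have hfst : (e i).1 = (e j).1 := by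
      rw [he, he]
      exact Quotient.sound (S.symm hij)
    simpa [Equiv.symm_apply_eq, Prod.ext_iff] using hfst

section Basis

variable {C : Type*} [CStarAlgebra C] {τ : C →ₗ[ℂ] ℂ}

lemma eq_sum_smul_star_of_span_eq_top {κ : Type*} [Fintype κ] [DecidableEq κ] {w : κ → C}
    (hw : ∀ i j, τ (star (w i) * w j) = if i = j then 1 else 0)
    (hspan : Submodule.span ℂ (Set.range w) = ⊤) (z : C) :
    z = ∑ i, τ (z * w i) • star (w i) := by
  obtain ⟨c, hc⟩ := (Submodule.mem_span_range_iff_exists_fun ℂ).mp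
    (hspan ▸ Submodule.mem_top : star z ∈ Submodule.span ℂ (Set.range w))
  have hz : z = ∑ i, star (c i) • star (w i) := by
    simpa only [star_star, star_sum, star_smul] using (congrArg star hc).symm
  have hcoeff : ∀ i, τ (z * w i) = star (c i) := fun i => by
    simp [hz, Finset.sum_mul, hw]
  simpa only [hcoeff] using hz

/-- Partial isometries `a r i` from `p i` to `p (σ r i)`, where the `p i` are orthogonal projections
of sum `1` and the permutations `σ r` have disjoint graphs: the matrix units out of which a basis of
unitaries is assembled. -/
structure IsPartialIsometrySystem {ι κ : Type*} [Fintype ι] (p : ι → C) (σ : κ → Equiv.Perm ι)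
    (a : κ → ι → C) : Prop where
  complete : CompleteOrthogonalIdempotents p
  isSelfAdjoint : ∀ i, IsSelfAdjoint (p i)
  perm_injective : ∀ i, Function.Injective fun r => σ r i
  mul_star : ∀ r i, a r i * star (a r i) = p (σ r i)
  star_mul : ∀ r i, star (a r i) * a r i = p i

/-- The generalized Weyl unitaries: the permutation `σ r` carries the phases in a column of `H`. -/
def weylUnitary {ι κ : Type*} [Fintype ι] (H : Matrix ι ι ℂ) (a : κ → ι → C) (q : κ × ι) : C :=
  ∑ i, H i q.2 • a q.1 i

namespace IsPartialIsometrySystem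

variable {ι κ : Type*} [Fintype ι] {p : ι → C} {σ : κ → Equiv.Perm ι} {a : κ → ι → C}

lemma mul_proj (h : IsPartialIsometrySystem p σ a) (r : κ) (i : ι) : a r i * p i = a r i := by
  have hp := (h.complete.idem i).eq
  refine (sub_eq_zero.mp ((CStarRing.star_mul_self_eq_zero_iff _).mp ?_)).symm
  have hstar : star (a r i - a r i * p i) = star (a r i) - p i * star (a r i) := by
    simp [(h.isSelfAdjoint i).star_eq]
  rw [hstar, sub_mul, mul_sub, mul_sub, ← mul_assoc, h.star_mul]
  simp only [mul_assoc, ← mul_assoc (star (a r i)) (a r i), h.star_mul, hp, sub_self]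

lemma proj_mul (h : IsPartialIsometrySystem p σ a) (r : κ) (i : ι) :
    p (σ r i) * a r i = a r i := by
  rw [← h.mul_star, mul_assoc, h.star_mul, h.mul_proj]

lemma proj_mul_star (h : IsPartialIsometrySystem p σ a) (r : κ) (i : ι) :
    p i * star (a r i) = star (a r i) := by
  simpa [(h.isSelfAdjoint _).star_eq] using congrArg star (h.mul_proj r i)

lemma star_mul_proj (h : IsPartialIsometrySystem p σ a) (r : κ) (i : ι) :
    star (a r i) * p (σ r i) = star (a r i) := by
  simpa [(h.isSelfAdjoint _).star_eq] using congrArg star (h.proj_mul r i)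

lemma star_mul_eq_zero (h : IsPartialIsometrySystem p σ a) {r s : κ} {i j : ι}
    (hij : σ r i ≠ σ s j) : star (a r i) * a s j = 0 := by
  rw [← h.star_mul_proj, ← h.proj_mul s, mul_assoc, ← mul_assoc (p _), h.complete.ortho hij,
    zero_mul, mul_zero]

lemma mul_star_eq_zero (h : IsPartialIsometrySystem p σ a) (r s : κ) {i j : ι} (hij : i ≠ j) :
    a r i * star (a s j) = 0 := by
  rw [← h.mul_proj, ← h.proj_mul_star, mul_assoc, ← mul_assoc (p _), h.complete.ortho hij,
    zero_mul, mul_zero]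

variable [DecidableEq ι]

lemma map_star_mul [DecidableEq κ] (h : IsPartialIsometrySystem p σ a)
    (hτ : ∀ x y, τ (x * y) = τ (y * x)) {t : ℂ} (hp : ∀ i, τ (p i) = t) (r s : κ) (i j : ι) :
    τ (star (a r i) * a s j) = if i = j then if r = s then t else 0 else 0 := by
  split_ifs with hij hrs
  · rw [← hij, ← hrs, h.star_mul, hp]
  · subst hij
    rw [h.star_mul_eq_zero fun hσ => hrs (h.perm_injective i hσ), map_zero]
  · rw [hτ, h.mul_star_eq_zero _ _ (Ne.symm hij), map_zero]

variable {H : Matrix ι ι ℂ}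

lemma weylUnitary_mem_unitary (h : IsPartialIsometrySystem p σ a) (hH : H.IsHadamard) (q : κ × ι) :
    weylUnitary H a q ∈ unitary C := by
  have hphase : ∀ i, star (H i q.2) * H i q.2 = 1 := fun i =>
    (Unitary.mem_iff.mp (hH.apply_mem i q.2)).1
  rw [Unitary.mem_iff, weylUnitary, star_sum]
  simp only [star_smul, Finset.sum_mul_sum, smul_mul_smul_comm]
  constructor
  · rw [← h.complete.complete]
    refine Finset.sum_congr rfl fun i _ => ?_
    rw [Finset.sum_eq_single_of_mem i (Finset.mem_univ i) fun j _ hj => by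
        rw [h.star_mul_eq_zero ((σ q.1).injective.ne hj.symm), smul_zero],
      hphase, one_smul, h.star_mul]
  · rw [← h.complete.complete, ← Equiv.sum_comp (σ q.1) p]
    refine Finset.sum_congr rfl fun i _ => ?_
    rw [Finset.sum_eq_single_of_mem i (Finset.mem_univ i) fun j _ hj => by
        rw [h.mul_star_eq_zero _ _ hj.symm, smul_zero],
      mul_comm, hphase, one_smul, h.mul_star]

lemma map_star_weylUnitary_mul [DecidableEq κ] [Nonempty ι] (h : IsPartialIsometrySystem p σ a)
    (hH : H.IsHadamard) (hτ : ∀ x y, τ (x * y) = τ (y * x))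
    (hp : ∀ i, τ (p i) = (Fintype.card ι : ℂ)⁻¹) (q q' : κ × ι) :
    τ (star (weylUnitary H a q) * weylUnitary H a q') = if q = q' then 1 else 0 := by
  have hcol : ∑ i, star (H i q.2) * H i q'.2 = if q.2 = q'.2 then (Fintype.card ι : ℂ) else 0 := by
    simpa [Matrix.mul_apply, Matrix.one_apply] using congrFun₂ hH.conjTranspose_mul q.2 q'.2
  have hcard : (Fintype.card ι : ℂ) ≠ 0 := Nat.cast_ne_zero.mpr Fintype.card_ne_zero
  simp only [weylUnitary, star_sum, star_smul, Finset.sum_mul_sum, smul_mul_smul_comm, map_sum,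
    map_smul, h.map_star_mul hτ hp, smul_eq_mul, mul_ite, mul_zero, Finset.sum_ite_eq,
    Finset.mem_univ, if_true]
  by_cases hr : q.1 = q'.1
  · simp only [hr, if_true, ← Finset.sum_mul, hcol, Prod.ext_iff, true_and]
    split_ifs <;> simp [hcard]
  · simp [hr, Prod.ext_iff]

end IsPartialIsometrySystem

lemma span_le_span_weylUnitary {ι κ : Type*} [Fintype ι] [DecidableEq ι] [Nonempty ι]
    {H : Matrix ι ι ℂ} (hH : H.IsHadamard) (a : κ → ι → C) :
    Submodule.span ℂ (Set.range fun q : κ × ι => a q.1 q.2) ≤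
      Submodule.span ℂ (Set.range (weylUnitary H a)) := by
  rw [Submodule.span_le]
  rintro _ ⟨⟨r, i⟩, rfl⟩
  have hcard : (Fintype.card ι : ℂ) ≠ 0 := Nat.cast_ne_zero.mpr Fintype.card_ne_zero
  have hrow : ∀ j, ∑ s, H j s * star (H i s) = if j = i then (Fintype.card ι : ℂ) else 0 :=
    fun j => by
      simpa [Matrix.mul_apply, Matrix.one_apply] using congrFun₂ hH.mul_conjTranspose j i
  have hinv : a r i =
      (Fintype.card ι : ℂ)⁻¹ • ∑ s, star (H i s) • weylUnitary H a (r, s) := by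
    simp only [weylUnitary, Finset.smul_sum (r := star _), smul_smul]
    rw [Finset.sum_comm]
    simp only [mul_comm (star _), ← Finset.sum_smul, hrow, ite_smul, zero_smul, Finset.sum_ite_eq',
      Finset.mem_univ, if_true, inv_smul_smul₀ hcard]
  simp only [hinv]
  exact Submodule.smul_mem _ _ <| Submodule.sum_mem _ fun s _ =>
    Submodule.smul_mem _ _ (Submodule.subset_span ⟨_, rfl⟩)

open scoped ComplexOrder

variable {c : ℝ}

/-- Homogeneity of a trace: up to Murray–von Neumann equivalence, the trace-preserving automorphisms
act transitively on the minimal projections. -/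
def IsHomogeneousTrace (τ : C →ₗ[ℂ] ℂ) : Prop := ∀ p q : C, IsMinProj p → IsMinProj q →
  ∃ α : C ≃⋆ₐ[ℂ] C, (∀ x, τ (α x) = τ x) ∧ MvNEquiv p (α q)

section Homogeneous

variable {ι : Type*} [Fintype ι] {p : ι → C}

lemma IsHomogeneousTrace.map_minProj_eq (hτ : IsHomogeneousTrace τ) (h : IsBoundedBelowTrace τ c)
    (hp : CompleteOrthogonalIdempotents p) (hmin : ∀ i, IsMinProj (p i)) (i : ι) :
    τ (p i) = (Fintype.card ι : ℂ)⁻¹ := by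
  have hconst : ∀ j, τ (p j) = τ (p i) := fun j => by
    obtain ⟨α, hα, hequiv⟩ := hτ (p j) (p i) (hmin j) (hmin i)
    rw [h.apply_eq_of_mvnEquiv hequiv, hα]
  have hsum : ∑ j, τ (p j) = 1 := by rw [← map_sum, hp.complete, h.map_one]
  simp only [hconst, Finset.sum_const, Finset.card_univ, nsmul_eq_mul] at hsum
  exact eq_inv_of_mul_eq_one_right hsum

/-- Murray–von Neumann equivalence of the members of a family of projections. -/
def mvnSetoid (p : ι → C) (hp : ∀ i, IsStarProjection (p i)) : Setoid ι where
  r i j := MvNEquiv (p i) (p j)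
  iseqv := ⟨fun i => .refl (hp i), .symm, .trans (hp _) (hp _)⟩

/-- Each `q * p j` is an intertwiner of two minimal projections. -/
lemma IsMinProj.mul_sum_eq_self_of_forall_mvnEquiv (hC : HasFiniteSpectra C)
    (hp : CompleteOrthogonalIdempotents p) (hmin : ∀ i, IsMinProj (p i)) {q : C}
    (hq : IsMinProj q) {s : Finset ι} (hs : ∀ j, MvNEquiv q (p j) → j ∈ s) :
    q * ∑ j ∈ s, p j = q := by
  have hzero : ∀ j ∉ s, q * p j = 0 := fun j hj => by
    by_contra hne
    exact hj <| hs j <| hq.mvnEquiv hC (hmin j) hne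
      (by rw [← mul_assoc, hq.isIdempotentElem.eq])
      (by rw [mul_assoc, (hmin j).isIdempotentElem.eq])
  rw [Finset.mul_sum, Finset.sum_subset (Finset.subset_univ s) fun j _ hj => hzero j hj,
    ← Finset.mul_sum, hp.complete, mul_one]

/-- A trace-preserving automorphism moves the sum of one class of minimal projections under the sum
of any other. -/
lemma IsHomogeneousTrace.card_mvn_class_le (hτ : IsHomogeneousTrace τ) (h : IsBoundedBelowTrace τ c)
    (hp : CompleteOrthogonalIdempotents p) (hmin : ∀ i, IsMinProj (p i)) (i j : ι) :
    Nat.card {k // MvNEquiv (p k) (p i)} ≤ Nat.card {k // MvNEquiv (p k) (p j)} := by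
  classical
  have hproj : ∀ i, IsStarProjection (p i) := fun i => (hmin i).toIsStarProjection
  obtain ⟨α, hα, hequiv⟩ := hτ (p j) (p i) (hmin j) (hmin i)
  let s : ι → Finset ι := fun i => {k | MvNEquiv (p k) (p i)}
  have hs : ∀ {i k}, k ∈ s i ↔ MvNEquiv (p k) (p i) := by simp [s]
  have hle : α (∑ k ∈ s i, p k) * ∑ k ∈ s j, p k = α (∑ k ∈ s i, p k) := by
    rw [map_sum, Finset.sum_mul]
    refine Finset.sum_congr rfl fun k hk => ?_
    refine ((hmin k).map α).mul_sum_eq_self_of_forall_mvnEquiv h.hasFiniteSpectra hp hmin ?_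
    intro l hl
    have hkj : MvNEquiv (α (p k)) (p j) :=
      ((hs.mp hk).map α).trans ((hproj k).map α) (hproj j) hequiv.symm
    exact hs.mpr (hl.symm.trans (hproj l) (hproj j) hkj)
  have hsum : ∀ i, IsStarProjection (∑ k ∈ s i, p k) := fun i =>
    isStarProjection_sum hp.toOrthogonalIdempotents _ fun k _ => (hproj k).isSelfAdjoint
  have htrace : ∀ i, (τ (∑ k ∈ s i, p k)).re = (s i).card * (Fintype.card ι : ℝ)⁻¹ := fun i => by
    simp only [map_sum, hτ.map_minProj_eq h hp hmin, Finset.sum_const, nsmul_eq_mul]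
    rw [← Complex.ofReal_natCast, ← Complex.ofReal_natCast, ← Complex.ofReal_inv,
      ← Complex.ofReal_mul, Complex.ofReal_re]
  have hcard := h.re_map_mono ((hsum i).map α) (hsum j) hle
  rw [hα, htrace, htrace] at hcard
  have hpos : 0 < (Fintype.card ι : ℝ)⁻¹ :=
    inv_pos.mpr (Nat.cast_pos.mpr (Fintype.card_pos_iff.mpr ⟨i⟩))
  simpa [s, Fintype.card_subtype] using le_of_mul_le_mul_right hcard hpos

lemma IsHomogeneousTrace.exists_isPartialIsometrySystem [Nonempty ι] (hτ : IsHomogeneousTrace τ)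
    (h : IsBoundedBelowTrace τ c) (hp : CompleteOrthogonalIdempotents p)
    (hmin : ∀ i, IsMinProj (p i)) :
    ∃ (k : ℕ) (σ : Fin k → Equiv.Perm ι) (a : Fin k → ι → C), IsPartialIsometrySystem p σ a ∧
      ∀ i j, MvNEquiv (p j) (p i) → ∃ r, σ r i = j := by
  have hproj : ∀ i, IsStarProjection (p i) := fun i => (hmin i).toIsStarProjection
  let i₀ := Classical.arbitrary ι
  have : Nonempty {k // MvNEquiv (p k) (p i₀)} := ⟨i₀, .refl (hproj i₀)⟩
  have : NeZero (Nat.card {k // MvNEquiv (p k) (p i₀)}) := ⟨Nat.card_pos.ne'⟩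
  obtain ⟨σ, hσ, hσinj, hσsurj⟩ := exists_perms_of_card_class_eq (mvnSetoid p hproj)
    fun i => (hτ.card_mvn_class_le h hp hmin i i₀).antisymm (hτ.card_mvn_class_le h hp hmin i₀ i)
  choose a hmul_star hstar_mul using hσ
  exact ⟨_, σ, a, ⟨hp, fun i => (hproj i).isSelfAdjoint, hσinj, hmul_star, hstar_mul⟩, hσsurj⟩

lemma IsPartialIsometrySystem.span_eq_top {κ : Type*} {σ : κ → Equiv.Perm ι} {a : κ → ι → C}
    (h : IsPartialIsometrySystem p σ a) (hC : HasFiniteSpectra C) (hmin : ∀ i, IsMinProj (p i))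
    (hσ : ∀ i j, MvNEquiv (p j) (p i) → ∃ r, σ r i = j) :
    Submodule.span ℂ (Set.range fun q : κ × ι => a q.1 q.2) = ⊤ := by
  refine eq_top_iff.mpr fun z _ => ?_
  have hz : z = ∑ i, ∑ j, p j * z * p i := by
    simp only [← Finset.sum_mul, ← Finset.mul_sum, h.complete.complete, one_mul, mul_one]
  rw [hz]
  refine Submodule.sum_mem _ fun i _ => Submodule.sum_mem _ fun j _ => ?_
  by_cases hne : p j * z * p i = 0
  · rw [hne]
    exact zero_mem _
  obtain ⟨r, rfl⟩ := hσ i j <| (hmin j).mvnEquiv hC (hmin i) hne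
    (by simp only [← mul_assoc, (hmin j).isIdempotentElem.eq])
    (by rw [mul_assoc, (hmin i).isIdempotentElem.eq])
  obtain ⟨t, ht⟩ := (hmin i).exists_corner_eq_smul hC (star (a r i) * z)
  have hcorner : p (σ r i) * z * p i = t • a r i := by
    calc p (σ r i) * z * p i = a r i * (p i * (star (a r i) * z) * p i) := by
          rw [← mul_assoc (p i), h.proj_mul_star, ← h.mul_star]
          simp only [mul_assoc]
      _ = t • a r i := by rw [ht, mul_smul_comm, h.mul_proj]
  rw [hcorner]
  exact Submodule.smul_mem _ _ (Submodule.subset_span ⟨(r, i), rfl⟩)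

end Homogeneous

theorem IsHomogeneousTrace.exists_unitary_basis (hτ : IsHomogeneousTrace τ)
    (h : IsBoundedBelowTrace τ c) :
    ∃ (n : ℕ) (w : Fin n → C), (∀ i, w i ∈ unitary C) ∧
      (∀ i j, τ (star (w i) * w j) = if i = j then 1 else 0) ∧
      ∀ z, z = ∑ i, τ (z * w i) • star (w i) := by
  obtain ⟨n, p, hp, hmin⟩ := h.exists_completeOrthogonalIdempotents
  have : Nonempty (Fin n) := by
    by_contra hn
    rw [not_nonempty_iff] at hn
    simpa [← hp.complete] using h.map_one
  obtain ⟨k, σ, a, ha, hσ⟩ := hτ.exists_isPartialIsometrySystem h hp hmin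
  obtain ⟨H, hH⟩ := exists_isHadamard (Fin n)
  let e : Fin (Fintype.card (Fin k × Fin n)) ≃ Fin k × Fin n := (Fintype.equivFin _).symm
  have horth : ∀ i j, τ (star (weylUnitary H a (e i)) * weylUnitary H a (e j)) =
      if i = j then 1 else 0 := fun i j => by
    simp only [ha.map_star_weylUnitary_mul hH h.map_mul_comm (hτ.map_minProj_eq h hp hmin),
      e.injective.eq_iff]
  have hspan : Submodule.span ℂ (Set.range fun i => weylUnitary H a (e i)) = ⊤ := by
    rw [← Function.comp_def, e.surjective.range_comp, eq_top_iff,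
      ← ha.span_eq_top h.hasFiniteSpectra hmin hσ]
    exact span_le_span_weylUnitary hH a
  exact ⟨_, _, fun i => ha.weylUnitary_mem_unitary hH _, horth,
    eq_sum_smul_star_of_span_eq_top horth hspan⟩

end Basis

/-! ### Relative commutants and conditional expectations -/

section CondExp

open scoped ComplexOrder

variable {M : Type*} [CStarAlgebra M] {B : StarSubalgebra ℂ M} {E : M →ₗ[ℂ] M}
  {n : ℕ} {l : Fin n → M}

/-- The relative commutant `C_A(B)`, that is the centralizer `cent B`, as a star subalgebra. -/
def relCommutant (B : StarSubalgebra ℂ M) : StarSubalgebra ℂ M :=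
  StarSubalgebra.centralizer ℂ (B : Set M)

lemma mem_relCommutant {z : M} : z ∈ relCommutant B ↔ z ∈ cent (B : Set M) := by
  rw [relCommutant, StarSubalgebra.mem_centralizer_iff]
  exact ⟨fun h b hb => (h b hb).1.symm,
    fun h b hb => ⟨(h b hb).symm, (h _ (star_mem hb)).symm⟩⟩

lemma commute_of_mem_relCommutant {z b : M} (hz : z ∈ relCommutant B) (hb : b ∈ B) :
    Commute z b :=
  mem_relCommutant.mp hz b hb

instance isClosed_relCommutant : IsClosed (relCommutant B : Set M) := by
  rw [relCommutant, StarSubalgebra.coe_centralizer]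
  exact Set.isClosed_centralizer _

lemma exp_mem_relCommutant {z : M} (hz : z ∈ relCommutant B) :
    NormedSpace.exp z ∈ relCommutant B :=
  mem_relCommutant.mpr fun _ hb => (commute_of_mem_relCommutant hz hb).exp_left

/-- The centre `B ∩ C_A(B)` of `B` consists of the scalars. -/
def HasTrivialCenter (B : StarSubalgebra ℂ M) : Prop :=
  ∀ z ∈ B, z ∈ relCommutant B → ∃ c : ℂ, z = c • (1 : M)

namespace IsCondExp

lemma map_mul_left (hE : IsCondExp (B : Set M) E) {b : M} (hb : b ∈ B) (x : M) :
    E (b * x) = b * E x := by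
  simpa using hE.2.2.2 b hb 1 (one_mem B) x

lemma map_mul_right (hE : IsCondExp (B : Set M) E) {b : M} (hb : b ∈ B) (x : M) :
    E (x * b) = E x * b := by
  simpa using hE.2.2.2 1 (one_mem B) b hb x

lemma map_one (hE : IsCondExp (B : Set M) E) : E 1 = 1 := hE.2.1 1 (one_mem B)

lemma map_nonneg [PartialOrder M] [StarOrderedRing M] (hE : IsCondExp (B : Set M) E) {x : M}
    (hx : 0 ≤ x) : 0 ≤ E x := by
  obtain ⟨y, rfl⟩ := CStarAlgebra.nonneg_iff_eq_star_mul_self.mp hx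
  obtain ⟨w, hw⟩ := hE.2.2.1 y
  exact hw ▸ star_mul_self_nonneg w

lemma map_star (hE : IsCondExp (B : Set M) E) (x : M) : E (star x) = star (E x) := by
  let _ := CStarAlgebra.spectralOrder M
  have _ := CStarAlgebra.spectralOrderedRing M
  exact StarHomClass.map_star (PositiveLinearMap.mk₀ E fun _ => hE.map_nonneg) x

lemma continuous (hE : IsCondExp (B : Set M) E) : Continuous E := by
  let _ := CStarAlgebra.spectralOrder M
  have _ := CStarAlgebra.spectralOrderedRing M
  exact map_continuous (PositiveLinearMap.mk₀ E fun _ => hE.map_nonneg)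

lemma exists_eq_smul_one (hE : IsCondExp (B : Set M) E) (hB : HasTrivialCenter B) {z : M}
    (hz : z ∈ relCommutant B) : ∃ c : ℂ, E z = c • (1 : M) :=
  hB (E z) (hE.1 z) <| mem_relCommutant.mpr fun b hb => by
    rw [← hE.map_mul_right hb, ← hE.map_mul_left hb, commute_of_mem_relCommutant hz hb]

lemma expand_left (hE : IsCondExp (B : Set M) E) (hl : IsRightQB E l) (x : M) :
    x = ∑ i, l i * E (star (l i) * x) := by
  simpa [← hE.map_star] using congrArg star (hl (star x))

lemma ext_mul (hE : IsCondExp (B : Set M) E) (hl : IsRightQB E l) {y y' : M}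
    (h : ∀ x, E (x * y) = E (x * y')) : y = y' := by
  rw [hE.expand_left hl y, hE.expand_left hl y']
  simp only [h]

end IsCondExp

/-! ### The index map -/

/-- The map `x ↦ ∑ λᵢ x λᵢ*` of a family `λ`; its value at `1` is the Watatani index when `λ` is a
right quasi-basis. -/
noncomputable def indexMap (l : Fin n → M) : M →L[ℂ] M :=
  ∑ i, ContinuousLinearMap.mulLeftRight ℂ M (l i) (star (l i))

lemma indexMap_apply (l : Fin n → M) (x : M) : indexMap l x = ∑ i, l i * x * star (l i) := by
  simp [indexMap]

lemma indexMap_one (l : Fin n → M) : indexMap l 1 = ∑ i, l i * star (l i) := by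
  simp [indexMap_apply]

lemma indexMap_star (l : Fin n → M) (x : M) : indexMap l (star x) = star (indexMap l x) := by
  simp [indexMap_apply, mul_assoc]

lemma IsCondExp.commute_indexMap (hE : IsCondExp (B : Set M) E) (hl : IsRightQB E l) {z : M}
    (hz : z ∈ relCommutant B) (a : M) : Commute (indexMap l z) a := by
  simp only [Commute, SemiconjBy, indexMap_apply]
  calc (∑ i, l i * z * star (l i)) * a
      = ∑ i, ∑ j, l i * (z * E (star (l i) * a * l j)) * star (l j) := by
        rw [Finset.sum_mul]
        refine Finset.sum_congr rfl fun i _ => ?_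
        conv_lhs => rw [mul_assoc, hl (star (l i) * a), Finset.mul_sum]
        simp only [mul_assoc]
    _ = ∑ j, (∑ i, l i * E (star (l i) * (a * l j))) * z * star (l j) := by
        rw [Finset.sum_comm]
        simp only [Finset.sum_mul, (commute_of_mem_relCommutant hz (hE.1 _)).eq, mul_assoc]
    _ = a * ∑ j, l j * z * star (l j) := by
        simp only [← hE.expand_left hl, Finset.mul_sum, mul_assoc]

lemma IsCondExp.exists_indexMap_eq_smul_one (hE : IsCondExp (B : Set M) E) (hl : IsRightQB E l)
    (hM : HasTrivialCenter (⊤ : StarSubalgebra ℂ M)) {z : M} (hz : z ∈ relCommutant B) :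
    ∃ c : ℂ, indexMap l z = c • (1 : M) :=
  hM _ trivial (mem_relCommutant.mpr fun a _ => hE.commute_indexMap hl hz a)

/-! ### Twisting an expectation by the relative commutant -/

/-- The map `y ↦ E (h* y h)`; for `h` in the relative commutant of `B` it is a variation of the
expectation `E` onto `B`. -/
noncomputable def twistBy (E : M →ₗ[ℂ] M) (h : M) : M →ₗ[ℂ] M :=
  E ∘ₗ LinearMap.mulLeftRight ℂ (star h, h)

lemma twistBy_apply (h y : M) : twistBy E h y = E (star h * y * h) := rfl

lemma IsCondExp.isCondExp_twistBy (hE : IsCondExp (B : Set M) E) {h : M}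
    (hh : h ∈ relCommutant B) (h_one : E (star h * h) = 1) :
    IsCondExp (B : Set M) (twistBy E h) := by
  have hcomm : ∀ b ∈ B, Commute h b := fun b hb => commute_of_mem_relCommutant hh hb
  have hcomm' : ∀ b ∈ B, Commute (star h) b := fun b hb =>
    commute_of_mem_relCommutant (star_mem hh) hb
  refine ⟨fun x => hE.1 _, fun b hb => ?_, fun x => ?_, fun b₁ hb₁ b₂ hb₂ x => ?_⟩
  · rw [twistBy_apply, (hcomm' b hb).eq, mul_assoc, hE.map_mul_left hb, h_one, mul_one]
  · obtain ⟨y, hy⟩ := hE.2.2.1 (x * h)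
    exact ⟨y, by rw [← hy, twistBy_apply, star_mul]; simp only [mul_assoc]⟩
  · have : star h * (b₁ * x * b₂) * h = b₁ * (star h * x * h) * b₂ := by
      rw [mul_assoc, mul_assoc (b₁ * x), ← (hcomm b₂ hb₂).eq]
      simp only [← mul_assoc, (hcomm' b₁ hb₁).eq]
    rw [twistBy_apply, this, hE.2.2.2 b₁ hb₁ b₂ hb₂, twistBy_apply]

lemma IsCondExp.isRightQB_twistBy (hE : IsCondExp (B : Set M) E) (hl : IsRightQB E l) {h k : M}
    (hk : k ∈ relCommutant B) (hhk : h * k = 1) (hkh : k * h = 1) :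
    IsRightQB (twistBy E h) (fun i => l i * k) := fun x => by
  have hkhs : star k * star h = 1 := by rw [← star_mul, hhk, star_one]
  have hterm : ∀ i, twistBy E h (x * (l i * k)) * star (l i * k) =
      star k * (E (star h * x * l i) * star (l i)) := fun i => by
    have : star h * (x * (l i * k)) * h = star h * x * l i := by simp [mul_assoc, hkh]
    rw [twistBy_apply, this, star_mul, ← mul_assoc, ← mul_assoc,
      (commute_of_mem_relCommutant (star_mem hk) (hE.1 _)).eq]
  simp only [hterm]
  rw [← Finset.mul_sum, ← hl, ← mul_assoc, hkhs, one_mul]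

lemma sum_mul_mul_star (l : Fin n → M) (k : M) :
    ∑ i, l i * k * star (l i * k) = indexMap l (k * star k) := by
  simp [indexMap_apply, mul_assoc]

/-! ### The first-order condition at the minimal expectation -/

lemma exists_apply_one_eq_one [Nontrivial M] : ∃ g : M →L[ℂ] ℂ, g 1 = 1 := by
  obtain ⟨g, -, hg⟩ := exists_dual_vector ℂ (1 : M) (norm_ne_zero_iff.mpr one_ne_zero)
  exact ⟨g, by simpa using hg⟩

lemma eq_re_apply_smul_one {g : M →L[ℂ] ℂ} (hg : g 1 = 1) {z : M} (hz : ∃ c : ℂ, z = c • (1 : M))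
    (hsa : IsSelfAdjoint z) : z = ((g z).re : ℂ) • (1 : M) := by
  obtain ⟨c, rfl⟩ := hz
  have hc : star c = c := by simpa [hg] using congrArg g hsa.star_eq
  simp [hg, Complex.conj_eq_iff_re.mp hc]

lemma nonneg_of_smul_one_nonneg [PartialOrder M] [StarOrderedRing M] [Nontrivial M] {c : ℂ}
    (h : 0 ≤ c • (1 : M)) : 0 ≤ c := by
  rw [← Algebra.algebraMap_eq_smul_one] at h
  exact spectrum_nonneg_of_nonneg h (by rw [spectrum.scalar_eq]; rfl)

/-- Here `1 = h* (k* k) h ≤ ‖k* k‖ h* h`. -/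
lemma IsCondExp.pos_of_map_star_mul_self_eq [Nontrivial M] (hE : IsCondExp (B : Set M) E)
    {h k : M} (hkh : k * h = 1) {c : ℝ} (hc : E (star h * h) = (c : ℂ) • 1) : 0 < c := by
  let _ := CStarAlgebra.spectralOrder M
  have _ := CStarAlgebra.spectralOrderedRing M
  have hle : star h * (star k * k) * h ≤ ‖star k * k‖ • (star h * h) :=
    CStarAlgebra.star_left_conjugate_le_norm_smul
  have hone : star h * (star k * k) * h = 1 := by
    rw [← mul_assoc, mul_assoc, hkh, mul_one, ← star_mul, hkh, star_one]
  have hnonneg := hE.map_nonneg (sub_nonneg.mpr hle)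
  rw [hone, ← Complex.coe_smul, map_sub, map_smul, hc, hE.map_one, smul_smul, ← Complex.ofReal_mul,
    ← one_smul ℂ (1 : M), smul_smul, mul_one, ← sub_smul, ← Complex.ofReal_one,
    ← Complex.ofReal_sub] at hnonneg
  have := Complex.zero_le_real.mp (nonneg_of_smul_one_nonneg hnonneg)
  exact pos_of_mul_pos_right (by linarith) (norm_nonneg _)

/-- `t ↦ φ (exp (t x)) ψ (exp (-t x))` has a minimum at `t = 0`. -/
lemma apply_mul_apply_one_eq_of_le_exp {R : Type*} [NormedRing R] [NormedAlgebra ℝ R]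
    [CompleteSpace R] {φ ψ : R →L[ℝ] ℝ} {x : R}
    (h : ∀ t : ℝ, φ 1 * ψ 1 ≤ φ (NormedSpace.exp (t • x)) * ψ (NormedSpace.exp (-(t • x)))) :
    φ x * ψ 1 = φ 1 * ψ x := by
  have hexp : ∀ (χ : R →L[ℝ] ℝ) (y : R),
      HasDerivAt (fun t : ℝ => χ (NormedSpace.exp (t • y))) (χ y) 0 := fun χ y => by
    have := χ.hasFDerivAt.comp_hasDerivAt (0 : ℝ) (hasDerivAt_exp_smul_const y (0 : ℝ))
    simpa [Function.comp_def] using this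
  have hderiv := (hexp φ x).mul (hexp ψ (-x))
  have hmin : IsLocalMin ((fun t : ℝ => φ (NormedSpace.exp (t • x))) *
      fun t : ℝ => ψ (NormedSpace.exp (t • -x))) 0 :=
    Filter.Eventually.of_forall fun t => by simpa using h t
  have hzero := hmin.hasDerivAt_eq_zero hderiv
  simp only [zero_smul, NormedSpace.exp_zero, map_neg] at hzero
  linarith

/-- `r₀` is at most the scalar index of every finite-index conditional expectation onto `B`. -/
def IsIndexLowerBound (B : StarSubalgebra ℂ M) (r₀ : ℝ) : Prop :=
  ∀ E : M →ₗ[ℂ] M, IsCondExp (B : Set M) E → ∀ (m : ℕ) (μ : Fin m → M), IsRightQB E μ →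
    ∀ r : ℝ, ∑ i, μ i * star (μ i) = (r : ℂ) • (1 : M) → r₀ ≤ r

namespace IsIndexLowerBound

variable {r₀ : ℝ}

lemma le_mul [Nontrivial M] (hr₀ : IsIndexLowerBound B r₀)
    (hE : IsCondExp (B : Set M) E) (hl : IsRightQB E l) {h k : M} (hh : h ∈ relCommutant B)
    (hk : k ∈ relCommutant B) (hhk : h * k = 1) (hkh : k * h = 1) {c f : ℝ}
    (hc : E (star h * h) = (c : ℂ) • 1) (hf : indexMap l (k * star k) = (f : ℂ) • 1) :
    r₀ ≤ c * f := by
  have hcpos := hE.pos_of_map_star_mul_self_eq hkh hc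
  obtain ⟨s, hs⟩ : ∃ s : ℝ, s ^ 2 = c := ⟨√c, Real.sq_sqrt hcpos.le⟩
  have hs0 : s ≠ 0 := fun h0 => by simp [← hs, h0] at hcpos
  have hsC : (s : ℂ) ≠ 0 := by exact_mod_cast hs0
  have h_one : E (star ((s : ℂ)⁻¹ • h) * ((s : ℂ)⁻¹ • h)) = 1 := by
    rw [star_smul, smul_mul_smul_comm, map_smul, hc, smul_smul, ← hs]
    have hs_one : (s : ℂ)⁻¹ * (s : ℂ)⁻¹ * ((s ^ 2 : ℝ) : ℂ) = 1 := by
      push_cast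
      field_simp
    rw [star_inv₀, RCLike.star_def, Complex.conj_ofReal, hs_one, one_smul]
  refine hr₀ _ (hE.isCondExp_twistBy ((relCommutant B).smul_mem hh _) h_one)
    n _ (hE.isRightQB_twistBy hl (k := (s : ℂ) • k) ((relCommutant B).smul_mem hk _) ?_ ?_) _ ?_
  · rw [smul_mul_smul_comm, hhk, inv_mul_cancel₀ hsC, one_smul]
  · rw [smul_mul_smul_comm, hkh, mul_inv_cancel₀ hsC, one_smul]
  · rw [sum_mul_mul_star, star_smul, smul_mul_smul_comm, map_smul, hf, smul_smul, ← hs]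
    simp [sq]

lemma le_mul_of_exp [Nontrivial M] (hr₀ : IsIndexLowerBound B r₀)
    (hE : IsCondExp (B : Set M) E) (hl : IsRightQB E l) {x : M} (hx : x ∈ relCommutant B)
    (hsa : IsSelfAdjoint x) {c f : ℝ} (hc : E (NormedSpace.exp x) = (c : ℂ) • 1)
    (hf : indexMap l (NormedSpace.exp (-x)) = (f : ℂ) • 1) : r₀ ≤ c * f := by
  let e : ℂ → M := fun s => NormedSpace.exp (s • x)
  have he_mul : ∀ s t : ℂ, e s * e t = e (s + t) := fun s t => by
    let _ : NormedAlgebra ℚ M := .restrictScalars ℚ ℂ M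
    simp only [e, add_smul]
    exact (NormedSpace.exp_add_of_commute ((Commute.refl x).smul_left s |>.smul_right t)).symm
  have he_mem : ∀ s, e s ∈ relCommutant B := fun s =>
    exp_mem_relCommutant ((relCommutant B).smul_mem hx s)
  have he_star : ∀ s : ℝ, star (e s) = e s := fun s => by
    simp [e, NormedSpace.star_exp, hsa.star_eq]
  have he_zero : e 0 = 1 := by simp [e]
  refine hr₀.le_mul hE hl (he_mem (2⁻¹ : ℝ)) (he_mem (-2⁻¹ : ℝ)) ?_ ?_ ?_ ?_
  · simp [he_mul, he_zero]
  · simp [he_mul, he_zero]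
  · rw [he_star, he_mul, ← hc]
    norm_num [e]
  · rw [he_star, he_mul, ← hf]
    norm_num [e]

/-- The perturbations `y ↦ E (exp (tx/2) y exp (tx/2)) / E (exp (tx))` have index
`E (exp (tx)) · ∑ λᵢ exp (-tx) λᵢ*`, which is minimal at `t = 0`. -/
lemma indexMap_eq_smul [Nontrivial M] (hr₀ : IsIndexLowerBound B r₀)
    (hE : IsCondExp (B : Set M) E) (hl : IsRightQB E l) (hl₀ : indexMap l 1 = (r₀ : ℂ) • 1)
    (hM : HasTrivialCenter (⊤ : StarSubalgebra ℂ M)) (hB : HasTrivialCenter B) {x : M}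
    (hx : x ∈ relCommutant B) (hsa : IsSelfAdjoint x) : indexMap l x = (r₀ : ℂ) • E x := by
  obtain ⟨g, hg⟩ := exists_apply_one_eq_one (M := M)
  let φ : M →L[ℝ] ℝ := Complex.reCLM ∘L (g ∘L ⟨E, hE.continuous⟩).restrictScalars ℝ
  let ψ : M →L[ℝ] ℝ := Complex.reCLM ∘L (g ∘L indexMap l).restrictScalars ℝ
  have hφ : ∀ z ∈ relCommutant B, IsSelfAdjoint z → E z = (φ z : ℂ) • 1 := fun z hz hzsa =>
    eq_re_apply_smul_one hg (hE.exists_eq_smul_one hB hz) (by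
      rw [IsSelfAdjoint, ← hE.map_star, hzsa.star_eq])
  have hψ : ∀ z ∈ relCommutant B, IsSelfAdjoint z → indexMap l z = (ψ z : ℂ) • 1 :=
    fun z hz hzsa => eq_re_apply_smul_one hg (hE.exists_indexMap_eq_smul_one hl hM hz) (by
      rw [IsSelfAdjoint, ← indexMap_star, hzsa.star_eq])
  have hφ1 : φ 1 = 1 := by simp [φ, hE.map_one, hg]
  have hψ1 : ψ 1 = r₀ := by simp [ψ, hl₀, hg]
  have hmin : ∀ t : ℝ, φ 1 * ψ 1 ≤
      φ (NormedSpace.exp (t • x)) * ψ (NormedSpace.exp (-(t • x))) := fun t => by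
    have htx : t • x ∈ relCommutant B := by simpa using (relCommutant B).smul_mem hx (t : ℂ)
    have htsa : IsSelfAdjoint (t • x) := (IsSelfAdjoint.all t).smul hsa
    rw [hφ1, hψ1, one_mul]
    exact hr₀.le_mul_of_exp hE hl htx htsa (hφ _ (exp_mem_relCommutant htx) htsa.exp)
      (hψ _ (exp_mem_relCommutant (neg_mem htx)) htsa.neg.exp)
  have hφψ : φ x * r₀ = ψ x := by
    simpa [hφ1, hψ1] using apply_mul_apply_one_eq_of_le_exp hmin
  rw [hψ x hx hsa, hφ x hx hsa, smul_smul, ← Complex.ofReal_mul, ← hφψ, mul_comm]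

end IsIndexLowerBound

/-! ### Balanced expectations -/

/-- A quasi-basis for `E` whose index map is a multiple of `E` on the relative commutant. This is
the Euler–Lagrange equation of the minimal expectation; at `1` it says that `E` has index `r`. -/
structure IsBalanced (B : StarSubalgebra ℂ M) (E : M →ₗ[ℂ] M) (l : Fin n → M) (r : ℂ) : Prop where
  isCondExp : IsCondExp (B : Set M) E
  isRightQB : IsRightQB E l
  indexMap_eq : ∀ z ∈ relCommutant B, indexMap l z = r • E z

lemma IsMinimalCondExp.exists_isBalanced [Nontrivial M] (hE : IsMinimalCondExp (B : Set M) E)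
    (hM : HasTrivialCenter (⊤ : StarSubalgebra ℂ M)) (hB : HasTrivialCenter B) :
    ∃ (n : ℕ) (l : Fin n → M) (r : ℂ), IsBalanced B E l r := by
  obtain ⟨hE, r₀, n, l, hl, hl₀, hr₀⟩ := hE
  rw [← indexMap_one] at hl₀
  have hsa : ∀ x : selfAdjoint (relCommutant B), indexMap l (x : relCommutant B) = (r₀ : ℂ) • E x :=
    fun x => IsIndexLowerBound.indexMap_eq_smul hr₀ hE hl hl₀ hM hB x.1.2
      (congrArg Subtype.val x.2)
  refine ⟨n, l, r₀, hE, hl, fun z hz => ?_⟩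
  have hz' : z = realPart (⟨z, hz⟩ : relCommutant B) +
      Complex.I • (imaginaryPart (⟨z, hz⟩ : relCommutant B) : relCommutant B) :=
    congrArg Subtype.val (realPart_add_I_smul_imaginaryPart (⟨z, hz⟩ : relCommutant B)).symm
  rw [hz']
  simp only [map_add, map_smul, hsa, smul_add, smul_comm Complex.I]

namespace IsBalanced

variable {r : ℂ}

lemma indexMap_one (h : IsBalanced B E l r) : indexMap l 1 = r • 1 := by
  rw [h.indexMap_eq 1 (one_mem _), h.isCondExp.map_one]

lemma index_ne_zero [Nontrivial M] (h : IsBalanced B E l r) : r ≠ 0 := by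
  rintro rfl
  let _ := CStarAlgebra.spectralOrder M
  have _ := CStarAlgebra.spectralOrderedRing M
  have hsum : ∑ i, l i * star (l i) = 0 := by
    rw [← RegularInclusion.indexMap_one, h.indexMap_one, zero_smul]
  have hl : ∀ i, l i = 0 := fun i => CStarRing.mul_star_self_eq_zero_iff _ |>.mp <|
    (Finset.sum_eq_zero_iff_of_nonneg fun i _ => mul_star_self_nonneg _).mp hsum i
      (Finset.mem_univ i)
  exact one_ne_zero (α := M) <| by simpa [hl] using h.isRightQB 1

lemma norm_mul_star_sq_le (h : IsBalanced B E l r) {x : M} (hx : x ∈ relCommutant B)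
    (i : Fin n) : ‖x * star (l i)‖ ^ 2 ≤ ‖r‖ * ‖E (star x * x)‖ := by
  let _ := CStarAlgebra.spectralOrder M
  have _ := CStarAlgebra.spectralOrderedRing M
  have hterm : ∀ j, l j * (star x * x) * star (l j) = star (x * star (l j)) * (x * star (l j)) :=
    fun j => by simp [mul_assoc]
  have hle : star (x * star (l i)) * (x * star (l i)) ≤ r • E (star x * x) := by
    rw [← h.indexMap_eq _ (mul_mem (star_mem hx) hx), indexMap_apply]
    simp only [hterm]
    exact Finset.single_le_sum (f := fun j => star (x * star (l j)) * (x * star (l j)))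
      (fun j _ => star_mul_self_nonneg _) (Finset.mem_univ i)
  rw [sq, ← CStarRing.norm_star_mul_self, ← norm_smul]
  exact CStarAlgebra.norm_le_norm_of_nonneg_of_le (star_mul_self_nonneg _) hle

lemma exists_mul_sq_norm_le (h : IsBalanced B E l r) :
    ∃ c : ℝ, 0 < c ∧ ∀ x ∈ relCommutant B, c * ‖x‖ ^ 2 ≤ ‖E (star x * x)‖ := by
  set K := (∑ i, ‖E (l i)‖) ^ 2 * ‖r‖ with hK
  have hK_pos : 0 < K + 1 := add_pos_of_nonneg_of_pos (by rw [hK]; positivity) one_pos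
  refine ⟨(K + 1)⁻¹, inv_pos.mpr hK_pos, fun x hx => ?_⟩
  have hx_eq : x = ∑ i, E (l i) * (x * star (l i)) := by
    conv_lhs => rw [← mul_one x, h.isRightQB 1, Finset.mul_sum]
    simp only [one_mul, ← mul_assoc, (commute_of_mem_relCommutant hx (h.isCondExp.1 _)).eq]
  have hnorm : ‖x‖ ≤ (∑ i, ‖E (l i)‖) * √(‖r‖ * ‖E (star x * x)‖) := by
    rw [Finset.sum_mul]
    nth_rw 1 [hx_eq]
    exact norm_sum_le_of_le _ fun i _ => (norm_mul_le _ _).trans <|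
      mul_le_mul_of_nonneg_left (Real.le_sqrt_of_sq_le (h.norm_mul_star_sq_le hx i))
        (norm_nonneg _)
  have hsq : ‖x‖ ^ 2 ≤ K * ‖E (star x * x)‖ := by
    calc ‖x‖ ^ 2 ≤ ((∑ i, ‖E (l i)‖) * √(‖r‖ * ‖E (star x * x)‖)) ^ 2 := by gcongr
      _ = K * ‖E (star x * x)‖ := by rw [mul_pow, Real.sq_sqrt (by positivity), hK, mul_assoc]
  rw [inv_mul_le_iff₀ hK_pos]
  linarith [norm_nonneg (E (star x * x))]

lemma eq_zero_of_map_star_mul_self_eq_zero (h : IsBalanced B E l r) {x : M}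
    (hx : x ∈ relCommutant B) (h0 : E (star x * x) = 0) : x = 0 := by
  obtain ⟨c, hc, hbound⟩ := h.exists_mul_sq_norm_le
  have hle : c * ‖x‖ ^ 2 ≤ 0 := by simpa [h0] using hbound x hx
  have : ‖x‖ ^ 2 = 0 := (nonpos_of_mul_nonpos_right hle hc).antisymm (sq_nonneg _)
  simpa using this

end IsBalanced

namespace IsCondExp

variable {E' : M →ₗ[ℂ] M} {m : ℕ} {l' : Fin m → M}

lemma exists_density (hE : IsCondExp (B : Set M) E) (hE' : IsCondExp (B : Set M) E')
    (hl' : IsRightQB E' l') : ∃ g ∈ relCommutant B, ∀ x, E' (x * g) = E x := by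
  obtain ⟨g, hg⟩ : ∃ g, ∀ x, E' (x * g) = E x := by
    refine ⟨∑ j, l' j * E (star (l' j)), fun x => ?_⟩
    conv_rhs => rw [hl' x]
    simp only [Finset.mul_sum, map_sum, ← mul_assoc, hE'.map_mul_right (hE.1 _),
      hE.map_mul_left (hE'.1 _)]
  refine ⟨g, mem_relCommutant.mpr fun b hb => hE'.ext_mul hl' fun x => ?_, hg⟩
  rw [← mul_assoc, ← mul_assoc, hE'.map_mul_right hb, hg, hg, hE.map_mul_right hb]

lemma indexMap_density (hE' : IsCondExp (B : Set M) E') (hl : IsRightQB E l)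
    (hl' : IsRightQB E' l') {g : M} (hg : ∀ x, E' (x * g) = E x) :
    indexMap l g = indexMap l' 1 := by
  calc indexMap l g = ∑ i, ∑ j, l' j * (E (star (l' j) * l i) * star (l i)) := by
        rw [indexMap_apply]
        refine Finset.sum_congr rfl fun i _ => ?_
        conv_lhs => rw [hE'.expand_left hl' (l i * g), Finset.sum_mul]
        simp only [← mul_assoc, hg]
    _ = indexMap l' 1 := by
        rw [Finset.sum_comm, indexMap_one]
        simp only [← Finset.mul_sum, ← hl _]

end IsCondExp

namespace IsBalanced

variable {E' : M →ₗ[ℂ] M} {m : ℕ} {l' : Fin m → M} {r : ℂ}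

/-- The density `g` of `E` with respect to `E'` satisfies `E g = 1`, so that
`E' ((1 - g)* (1 - g)) = E' (1 - g)* - E (1 - g)* = 0`. -/
lemma unique [Nontrivial M] (h : IsBalanced B E l r) (h' : IsBalanced B E' l' r) : E = E' := by
  obtain ⟨g, hgB, hg⟩ := h.isCondExp.exists_density h'.isCondExp h'.isRightQB
  have hEg : E g = 1 := smul_right_injective M h.index_ne_zero <| by
    beta_reduce
    rw [← h.indexMap_eq g hgB, h'.isCondExp.indexMap_density h.isRightQB h'.isRightQB hg,
      h'.indexMap_one]
  have hE'g : E' g = 1 := by rw [← one_mul g, hg, h.isCondExp.map_one]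
  have hzero : E' (star (1 - g) * (1 - g)) = 0 := by
    rw [mul_sub, mul_one, map_sub, hg, h.isCondExp.map_star, h'.isCondExp.map_star, map_sub,
      map_sub, hEg, hE'g, h.isCondExp.map_one, h'.isCondExp.map_one, sub_self]
  have hg_one : 1 - g = 0 :=
    h'.eq_zero_of_map_star_mul_self_eq_zero (sub_mem (one_mem _) hgB) hzero
  ext x
  rw [← hg, ← sub_eq_zero.mp hg_one, mul_one]

end IsBalanced

/-! ### Symmetries of the balanced expectation -/

/-- The transport `α⁻¹ ∘ E ∘ α` of `E` along an automorphism `α`. -/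
noncomputable def conjBy (E : M →ₗ[ℂ] M) (α : M ≃⋆ₐ[ℂ] M) : M →ₗ[ℂ] M :=
  α.symm.toAlgEquiv.toLinearMap ∘ₗ E ∘ₗ α.toAlgEquiv.toLinearMap

lemma conjBy_apply (α : M ≃⋆ₐ[ℂ] M) (x : M) : conjBy E α x = α.symm (E (α x)) := rfl

/-- `α` preserves `B` globally. -/
def Preserves (α : M ≃⋆ₐ[ℂ] M) (B : StarSubalgebra ℂ M) : Prop := ∀ x, α x ∈ B ↔ x ∈ B

namespace Preserves

variable {α : M ≃⋆ₐ[ℂ] M}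

lemma symm_mem (hα : Preserves α B) {b : M} (hb : b ∈ B) : α.symm b ∈ B :=
  (hα _).mp <| by rwa [StarAlgEquiv.apply_symm_apply]

lemma preserves_relCommutant (hα : Preserves α B) : Preserves α (relCommutant B) := fun z => by
  simp only [mem_relCommutant]
  refine ⟨fun h b hb => EquivLike.injective α ?_,
    fun h b hb => EquivLike.injective α.symm ?_⟩
  · rw [map_mul, map_mul, h _ ((hα b).mpr hb)]
  · rw [map_mul, map_mul, α.symm_apply_apply, h _ (hα.symm_mem hb)]

lemma isCondExp_conjBy (hα : Preserves α B) (hE : IsCondExp (B : Set M) E) :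
    IsCondExp (B : Set M) (conjBy E α) := by
  refine ⟨fun x => hα.symm_mem (hE.1 _), fun b hb => ?_, fun x => ?_,
    fun b₁ hb₁ b₂ hb₂ x => ?_⟩
  · rw [conjBy_apply, hE.2.1 _ ((hα b).mpr hb), α.symm_apply_apply]
  · obtain ⟨y, hy⟩ := hE.2.2.1 (α x)
    exact ⟨α.symm y, by simp only [conjBy_apply, map_mul, map_star, hy]⟩
  · simp only [conjBy_apply, map_mul, hE.2.2.2 _ ((hα b₁).mpr hb₁) _ ((hα b₂).mpr hb₂),
      α.symm_apply_apply]

end Preserves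

lemma IsRightQB.conjBy (hl : IsRightQB E l) (α : M ≃⋆ₐ[ℂ] M) :
    IsRightQB (conjBy E α) (fun i => α.symm (l i)) := fun x => by
  conv_lhs => rw [← α.symm_apply_apply x, hl (α x)]
  simp only [map_sum, map_mul, map_star, conjBy_apply, α.apply_symm_apply]

lemma indexMap_conj (α : M ≃⋆ₐ[ℂ] M) (x : M) :
    indexMap (fun i => α.symm (l i)) x = α.symm (indexMap l (α x)) := by
  simp only [indexMap_apply, map_sum, map_mul, map_star, α.symm_apply_apply]

namespace IsBalanced

variable {r : ℂ} {α : M ≃⋆ₐ[ℂ] M}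

lemma conjBy (h : IsBalanced B E l r) (hα : Preserves α B) :
    IsBalanced B (conjBy E α) (fun i => α.symm (l i)) r where
  isCondExp := hα.isCondExp_conjBy h.isCondExp
  isRightQB := h.isRightQB.conjBy α
  indexMap_eq z hz := by
    rw [indexMap_conj, h.indexMap_eq _ ((hα.preserves_relCommutant z).mpr hz), map_smul,
      conjBy_apply]

lemma map_comm [Nontrivial M] (h : IsBalanced B E l r) (hα : Preserves α B) (x : M) :
    E (α x) = α (E x) := by
  conv_rhs => rw [h.unique (h.conjBy hα), conjBy_apply, α.apply_symm_apply]

end IsBalanced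

lemma preserves_conj_of_mem_relCommutant {u : unitary M} (hu : (u : M) ∈ relCommutant B) :
    Preserves (Unitary.conjStarAlgAut ℂ M u) B := by
  have hfix : ∀ b ∈ B, Unitary.conjStarAlgAut ℂ M u b = b := fun b hb => by
    rw [Unitary.conjStarAlgAut_apply, commute_of_mem_relCommutant hu hb, mul_assoc,
      Unitary.mul_star_self_of_mem u.2, mul_one]
  exact fun x => ⟨fun hx => EquivLike.injective _ (hfix _ hx) ▸ hx, fun hx => (hfix x hx).symm ▸ hx⟩

lemma preserves_conj_iff {u : unitary M} :
    Preserves (Unitary.conjStarAlgAut ℂ M u) B ↔ (u : M) ∈ normalizer (B : Set M) := by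
  set α := Unitary.conjStarAlgAut ℂ M u
  have h_normalizer : (u : M) ∈ normalizer (B : Set M) ↔ α '' B = B := and_iff_right u.2
  rw [h_normalizer]
  refine ⟨fun h => ?_, fun h x => ?_⟩
  · conv_lhs => rw [← show α ⁻¹' B = B from Set.ext h]
    exact Set.image_preimage_eq _ (EquivLike.surjective α)
  · have hx : α x ∈ α '' B ↔ x ∈ B := (EquivLike.injective α).mem_set_image
    rwa [h] at hx

/-- The normalizer `N_A(B)` as a group of unitaries, through the automorphisms they induce. -/
def normalizerGroup (B : StarSubalgebra ℂ M) : Subgroup (unitary M) where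
  carrier := {u | Preserves (Unitary.conjStarAlgAut ℂ M u) B}
  one_mem' x := by simp
  mul_mem' hu hv x := by
    rw [Unitary.conjStarAlgAut_mul_apply]
    exact (hu _).trans (hv x)
  inv_mem' {u} hu x := by
    rw [← hu, ← Unitary.conjStarAlgAut_mul_apply, mul_inv_cancel, map_one]
    rfl

lemma coe_image_normalizerGroup :
    ((↑) : unitary M → M) '' normalizerGroup B = normalizer (B : Set M) := by
  ext x
  refine ⟨?_, fun hx => ⟨⟨x, hx.1⟩, preserves_conj_iff.mpr hx, rfl⟩⟩
  rintro ⟨u, hu, rfl⟩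
  exact preserves_conj_iff.mp hu

/-- Conjugation by a unitary `u` of the relative commutant fixes `B`, so `E (u x u*) = E x`. -/
lemma IsBalanced.map_unitary_mul_comm [Nontrivial M] {r : ℂ} (h : IsBalanced B E l r)
    {u : unitary M} (hu : (u : M) ∈ relCommutant B) (x : M) : E (u * x) = E (x * u) := by
  have hconj := h.map_comm (preserves_conj_of_mem_relCommutant hu) (x * u)
  simp only [Unitary.conjStarAlgAut_apply] at hconj
  rw [(commute_of_mem_relCommutant hu (h.isCondExp.1 _)).eq] at hconj
  simpa [mul_assoc] using hconj

lemma IsBalanced.map_mul_comm [Nontrivial M] {r : ℂ} (h : IsBalanced B E l r) {c : M}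
    (hc : c ∈ relCommutant B) (x : M) : E (c * x) = E (x * c) := by
  let ι : relCommutant B →ₗ[ℂ] M := (relCommutant B).subtype.toAlgHom.toLinearMap
  have hEq : E ∘ₗ LinearMap.mulRight ℂ x ∘ₗ ι = E ∘ₗ LinearMap.mulLeft ℂ x ∘ₗ ι :=
    LinearMap.ext_on (CStarAlgebra.span_unitary (relCommutant B)) fun u hu =>
      h.map_unitary_mul_comm (u := ⟨u, Unitary.map_mem (relCommutant B).subtype hu⟩) u.2 x
  exact LinearMap.congr_fun hEq ⟨c, hc⟩

/-! ### Linking projections -/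

lemma IsPrimeCStar.exists_mul_mul_ne_zero (hM : IsPrimeCStar (Set.univ : Set M))
    {G : Subgroup (unitary M)}
    (hG : (StarAlgebra.adjoin ℂ (((↑) : unitary M → M) '' G)).topologicalClosure = ⊤)
    {p q : M} (hp : p ≠ 0) (hq : q ≠ 0) : ∃ u ∈ G, p * (u : M) * q ≠ 0 := by
  by_contra! hzero
  let N : Submonoid M := G.toSubmonoid.map (unitary M).subtype
  have hN_star : star (N : Set M) ⊆ N := by
    rintro x ⟨u, hu, hux⟩
    exact ⟨u⁻¹, G.inv_mem hu, star_eq_iff_star_eq.mp hux.symm⟩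
  have hN_zero : Submodule.span ℂ (N : Set M) ≤
      LinearMap.ker (LinearMap.mulLeftRight ℂ (p, q)) := by
    rw [Submodule.span_le]
    rintro _ ⟨u, hu, rfl⟩
    exact hzero u hu
  have hadjoin : ∀ a ∈ StarAlgebra.adjoin ℂ (N : Set M), p * a * q = 0 := fun a ha => hN_zero <| by
    rwa [← StarSubalgebra.mem_toSubalgebra, ← Subalgebra.mem_toSubmodule,
      StarAlgebra.adjoin_eq_span, Set.union_eq_left.mpr hN_star, Submonoid.closure_eq] at ha
  have hN : ((↑) : unitary M → M) '' G = N := rfl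
  have hclosed : IsClosed {a : M | p * a * q = 0} :=
    isClosed_eq ((continuous_const_mul p).mul_const q) continuous_const
  refine (hM p trivial q trivial fun a _ => closure_minimal hadjoin hclosed ?_).elim hp hq
  rw [← StarSubalgebra.topologicalClosure_coe, ← hN, hG]
  trivial

/-! ### The trace on the relative commutant -/

/-- The automorphism of `S` induced by an automorphism preserving `S`. -/
noncomputable def Preserves.restrict {α : M ≃⋆ₐ[ℂ] M} {S : StarSubalgebra ℂ M}
    (hα : Preserves α S) : S ≃⋆ₐ[ℂ] S :=
  .ofStarAlgHom
    (((α : M →⋆ₐ[ℂ] M).comp S.subtype).codRestrict S fun x => (hα x).mpr x.2)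
    (((α.symm : M →⋆ₐ[ℂ] M).comp S.subtype).codRestrict S fun x => hα.symm_mem x.2)
    (by ext x; exact α.symm_apply_apply x) (by ext x; exact α.apply_symm_apply x)

lemma Preserves.coe_restrict {α : M ≃⋆ₐ[ℂ] M} {S : StarSubalgebra ℂ M} (hα : Preserves α S)
    (x : S) : (hα.restrict x : M) = α x := rfl

lemma IsCondExp.exists_map_eq_smul_one [Nontrivial M] (hE : IsCondExp (B : Set M) E)
    (hB : HasTrivialCenter B) :
    ∃ τ : relCommutant B →ₗ[ℂ] ℂ, ∀ z : relCommutant B, E z = τ z • (1 : M) := by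
  obtain ⟨g, hg⟩ := exists_apply_one_eq_one (M := M)
  refine ⟨g.toLinearMap ∘ₗ E ∘ₗ (relCommutant B).subtype.toAlgHom.toLinearMap, fun z => ?_⟩
  obtain ⟨c, hc⟩ := hE.exists_eq_smul_one hB z.2
  have hτ : g (E z) = c := by rw [hc, map_smul, hg, smul_eq_mul, mul_one]
  exact hc.trans (hτ ▸ rfl)

namespace IsBalanced

variable [Nontrivial M] {r : ℂ} {τ : relCommutant B →ₗ[ℂ] ℂ}

lemma exists_isBoundedBelowTrace (h : IsBalanced B E l r)
    (hτ : ∀ z : relCommutant B, E z = τ z • (1 : M)) : ∃ c : ℝ, IsBoundedBelowTrace τ c := by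
  obtain ⟨c, hc, hbound⟩ := h.exists_mul_sq_norm_le
  have hinj : Function.Injective fun s : ℂ => s • (1 : M) := smul_left_injective ℂ one_ne_zero
  refine ⟨c, hc, hinj ?_, fun x y => hinj ?_, fun x => ?_⟩
  · simp only [← hτ, one_smul]
    exact h.isCondExp.map_one
  · simp only [← hτ]
    exact h.map_mul_comm x.2 y
  · let _ := CStarAlgebra.spectralOrder M
    have _ := CStarAlgebra.spectralOrderedRing M
    have hE : E (star (x : M) * x) = τ (star x * x) • 1 := hτ (star x * x)
    have hnonneg : 0 ≤ τ (star x * x) :=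
      nonneg_of_smul_one_nonneg (hE ▸ h.isCondExp.map_nonneg (star_mul_self_nonneg (x : M)))
    have hx := hbound x x.2
    rw [hE, norm_smul, norm_one, mul_one] at hx
    rw [← Complex.norm_of_nonneg' hnonneg]
    exact_mod_cast hx

/-- Conjugating by a normalizing unitary `u` with `p u q ≠ 0` links `p` to `u q u*`. -/
lemma isHomogeneousTrace (h : IsBalanced B E l r) (hM : IsPrimeCStar (Set.univ : Set M))
    (hreg : IsRegular (B : Set M)) (hτ : ∀ z : relCommutant B, E z = τ z • (1 : M)) :
    IsHomogeneousTrace τ := by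
  intro p q hp hq
  obtain ⟨c, hc⟩ := h.exists_isBoundedBelowTrace hτ
  obtain ⟨u, hu, hpuq⟩ := hM.exists_mul_mul_ne_zero (G := normalizerGroup B)
    (p := (p : M)) (q := (q : M)) (by rwa [coe_image_normalizerGroup])
    (by simpa using hp.ne_zero) (by simpa using hq.ne_zero)
  have hu : Preserves (Unitary.conjStarAlgAut ℂ M u) B := hu
  let α := hu.preserves_relCommutant.restrict
  have hατ : ∀ x, τ (α x) = τ x := fun x => smul_left_injective ℂ (one_ne_zero (α := M)) <| by
    beta_reduce
    rw [← hτ, Preserves.coe_restrict, h.map_comm hu, hτ, map_smul, map_one]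
  have hne : p * α q ≠ 0 := fun h0 => hpuq <| by
    have h0 : (p : M) * (u * q * star (u : M)) * u = 0 := by
      rw [show (p : M) * (u * q * star (u : M)) = 0 from congrArg Subtype.val h0, zero_mul]
    simpa [mul_assoc] using h0
  refine ⟨α, hατ, hp.mvnEquiv hc.hasFiniteSpectra (hq.map α) hne ?_ ?_⟩
  · rw [← mul_assoc, hp.isIdempotentElem.eq]
  · rw [mul_assoc, (hq.map α).isIdempotentElem.eq]

end IsBalanced

end CondExp

lemma IsPrimeCStar.hasTrivialCenter {M : Type*} [CStarAlgebra M] {S : StarSubalgebra ℂ M}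
    (hS : IsPrimeCStar (S : Set M)) (hclosed : IsClosed (S : Set M)) : HasTrivialCenter S :=
  fun _ hzS hz => hS.exists_eq_smul_one hclosed hzS (mem_relCommutant.mp hz)

theorem tau0_has_unitary_ON_quasi_basis_general {M : Type*} [CStarAlgebra M]
    (B : StarSubalgebra ℂ M) (hM : IsPrimeCStar (Set.univ : Set M)) (hB : HasTrivialCenter B)
    (hreg : IsRegular (B : Set M)) (E₀ : M →ₗ[ℂ] M) (hE₀ : IsMinimalCondExp (B : Set M) E₀) :
    (∀ z ∈ cent (B : Set M), ∃ c : ℂ, E₀ z = c • (1 : M)) ∧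
    ∃ (n : ℕ) (w : Fin n → M),
      (∀ i, w i ∈ cent (B : Set M) ∧ w i ∈ unitary M) ∧
      (∀ i j, E₀ (star (w i) * w j) = if i = j then (1 : M) else 0) ∧
      (∀ z ∈ cent (B : Set M), z = ∑ i, E₀ (z * w i) * star (w i)) := by
  refine ⟨fun z hz => hE₀.1.exists_eq_smul_one hB (mem_relCommutant.mpr hz), ?_⟩
  rcases subsingleton_or_nontrivial M with hsub | hnontriv
  · exact ⟨0, Fin.elim0, fun i => i.elim0, fun i => i.elim0, fun z _ => Subsingleton.elim _ _⟩
  have hcenter : HasTrivialCenter (⊤ : StarSubalgebra ℂ M) :=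
    IsPrimeCStar.hasTrivialCenter (by simpa using hM) isClosed_univ
  obtain ⟨n, l, r, hbal⟩ := hE₀.exists_isBalanced hcenter hB
  obtain ⟨τ, hτ⟩ := hE₀.1.exists_map_eq_smul_one hB
  obtain ⟨c, htrace⟩ := hbal.exists_isBoundedBelowTrace hτ
  obtain ⟨m, w, hw_unitary, hw_orth, hw_basis⟩ :=
    (hbal.isHomogeneousTrace hM hreg hτ).exists_unitary_basis htrace
  refine ⟨m, fun i => w i, fun i => ⟨mem_relCommutant.mp (w i).2,
    Unitary.map_mem (relCommutant B).subtype (hw_unitary i)⟩, fun i j => ?_, fun z hz => ?_⟩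
  · have := hτ (star (w i) * w j)
    rw [hw_orth, ite_smul, one_smul, zero_smul] at this
    exact this
  · lift z to relCommutant B using mem_relCommutant.mpr hz
    have hterm : ∀ i, E₀ (z * w i) * star (w i : M) = τ (z * w i) • star (w i : M) := fun i => by
      rw [show E₀ (z * w i) = τ (z * w i) • 1 from hτ (z * w i), smul_one_mul]
    simpa [hterm] using congrArg Subtype.val (hw_basis z)

/-- for a regular inclusion `B ⊂ A` of simple unital C*-algebras with a
finite-index conditional expectation and minimal conditional expectation `E₀`, `E₀` maps
`C_A(B)` into `ℂ·1` and the induced faithful tracial state `τ₀` on `C_A(B)` admits a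
unitary orthonormal quasi-basis. -/
theorem tau0_has_unitary_ON_quasi_basis
    (B : StarSubalgebra ℂ A) (hBclosed : IsClosed (B : Set A))
    (hAsimple : IsSimpleCStar (Set.univ : Set A))
    (hBsimple : IsSimpleCStar (B : Set A))
    (hreg : IsRegular (B : Set A))
    (E : A →ₗ[ℂ] A) (hE : IsCondExp (B : Set A) E)
    (nE : ℕ) (lE : Fin nE → A) (hlE : IsRightQB E lE)
    (E₀ : A →ₗ[ℂ] A) (hE₀ : IsMinimalCondExp (B : Set A) E₀) :
    (∀ z ∈ cent (B : Set A), ∃ c : ℂ, E₀ z = c • (1 : A)) ∧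
    ∃ (n : ℕ) (w : Fin n → A),
      (∀ i, w i ∈ cent (B : Set A) ∧ w i ∈ unitary A) ∧
      (∀ i j, E₀ (star (w i) * w j) = if i = j then (1 : A) else 0) ∧
      (∀ z ∈ cent (B : Set A), z = ∑ i, E₀ (z * w i) * star (w i)) := by
  let _ : CStarAlgebra A := {}
  have hAprime : IsPrimeCStar ((⊤ : StarSubalgebra ℂ A) : Set A) :=
    IsSimpleCStar.isPrimeCStar hAsimple isClosed_univ
  exact tau0_has_unitary_ON_quasi_basis_general B hAprime
    ((hBsimple.isPrimeCStar hBclosed).hasTrivialCenter hBclosed) hreg E₀ hE₀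

end RegularInclusion
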